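/- Let R be a commutative Noetherian ring and 𝔞 a proper ideal of R such that either dim R/𝔞 ≤ 1, or dim R ≤ 2, or ara(𝔞) ≤ 1. Let M be an R-module such that Ext^i_R(R/𝔞, M) is a finitely generated R-module for every i ≥ 0. Then H^i_𝔞(M) is 𝔞-cofinite for every i ≥ 0; in particular, the set of associated primes Ass_R H^i_𝔞(M) is finite for every i ≥ 0. -/

import Mathlib

open CategoryTheory

universe u

/-- The `R`-module `Ext^i_R(N, M)` for two `R`-modules (objects of `ModuleCat R`). -/
noncomputable def extObj {R : Type u} [CommRing R] (N M : ModuleCat.{u} R) (i : ℕ) :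
    ModuleCat.{u} R :=
  ((Ext R (ModuleCat.{u} R) i).obj (Opposite.op N)).obj M

/-- The `R`-module `Ext^i_R(R/𝔞, M)`. -/
noncomputable def extIdeal {R : Type u} [CommRing R] (𝔞 : Ideal R) (i : ℕ)
    (M : ModuleCat.{u} R) : ModuleCat.{u} R :=
  extObj (ModuleCat.of R (R ⧸ 𝔞)) M i

/-- An `R`-module `M` is `𝔞`-cofinite if `Supp_R M ⊆ V(𝔞)` and `Ext^i_R(R/𝔞, M)` is a finitely
generated `R`-module for every `i ≥ 0`. -/
def IsCofinite {R : Type u} [CommRing R] (𝔞 : Ideal R) (M : ModuleCat.{u} R) : Prop :=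
  Module.support R M ⊆ PrimeSpectrum.zeroLocus (𝔞 : Set R) ∧
    ∀ i : ℕ, Module.Finite R (extIdeal 𝔞 i M)

/-- The Krull dimension `dim_R M` of an `R`-module `M`: the Krull dimension of its support,
i.e. the supremum of `dim R/𝔭` over primes `𝔭` in the support of `M`. -/
noncomputable def moduleDim (R : Type u) [CommRing R] (M : Type u) [AddCommGroup M]
    [Module R M] : WithBot ℕ∞ :=
  Order.krullDim (Module.support R M)

/-- An `R`-module `M` is in `FD_{≤n}` if there is a finitely generated submodule `N ⊆ M`
with `dim_R (M/N) ≤ n`. -/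
def MemFD (R : Type u) [CommRing R] (n : ℕ) (M : Type u) [AddCommGroup M] [Module R M] : Prop :=
  ∃ N : Submodule R M, N.FG ∧ moduleDim R (M ⧸ N) ≤ (n : WithBot ℕ∞)

/-- An `R`-module `M` is `𝔞`-torsion if every element is annihilated by some power of `𝔞`. -/
def IsTorsionIdeal {R : Type u} [CommRing R] (𝔞 : Ideal R) (M : Type u) [AddCommGroup M]
    [Module R M] : Prop :=
  ∀ m : M, ∃ n : ℕ, ∀ a ∈ 𝔞 ^ n, a • m = 0

/-- The arithmetic rank of an ideal `𝔞`: the least `n` such that there exist `a₁, …, aₙ ∈ R`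
with `Rad (a₁, …, aₙ) = Rad 𝔞`. -/
noncomputable def arithRank {R : Type u} [CommRing R] (𝔞 : Ideal R) : ℕ :=
  sInf {n : ℕ | ∃ f : Fin n → R, (Ideal.span (Set.range f)).radical = 𝔞.radical}

/-!
In each of the three cases an `𝔞`-torsion module `A` has all `Ext^n(R/𝔞, A)` finitely generated as
soon as `Ext^0` and `Ext^1` are. Elements `x ∈ 𝔞` kill `Ext^n(R/𝔞, A)`, so it suffices to control
the kernel and the cokernel of multiplication by `x`. If `𝔞` is generated by `x` up to radical,
both are finitely generated. If `dim R/𝔞 ≤ 1`, then for a suitable `x`, and modulo a finitely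
generated submodule of `A`, the kernel has a larger annihilator, which allows Noetherian induction,
and the cokernel is Artinian, where finiteness of `Ext^0` suffices. If `dim R ≤ 2`, then
`Γ_𝔞(R) • A` is finitely generated and `dim R/(𝔞 + Γ_𝔞(R)) ≤ 1`.

Local cohomology is then computed by dimension shifting. Embed `M` in an injective module `I` and
put `E = I/Γ_𝔞(I)`. As `Γ_𝔞(I)` is again injective, `Ext^n(R/𝔞^t, E) = 0` for all `n` and `t`.
Moreover `M/Γ_𝔞(M)` embeds in `E`, and `Γ_𝔞(M)` has no local cohomology in positive degrees, so
`H^{i+1}_𝔞(M)` is `H^i_𝔞` of the cokernel of `M/Γ_𝔞(M) → E`, whose `Ext^n(R/𝔞, -)` are again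
finitely generated. The process ends in degree zero, at `Γ_𝔞`, which is `𝔞`-torsion and inherits the
finiteness of `Ext^0` and `Ext^1`.
-/

theorem exists_forall_ge_eq_of_antitone {α : Type*} [PartialOrder α] [WellFoundedLT α]
    (F : ℕ → ℕ → α) (hleft : ∀ l, Antitone (F · l)) (hright : ∀ n, Antitone (F n)) :
    ∃ k, ∀ n, ∀ l ≥ k, F n l = F n k := by
  have stabilizes (a : ℕ → α) (ha : Antitone a) : ∃ k, ∀ l ≥ k, a l = a k := by
    obtain ⟨k, hk⟩ := wellFoundedGT_iff_monotone_chain_condition.1 inferInstance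
      (⟨fun n ↦ OrderDual.toDual (a n), fun _ _ h ↦ ha h⟩ : ℕ →o αᵒᵈ)
    exact ⟨k, fun l hl ↦ (hk l hl).symm⟩
  obtain ⟨N, hN⟩ := stabilizes (fun n ↦ F n n)
    fun m n hmn ↦ (hleft n hmn).trans (hright m hmn)
  have hlarge {n l : ℕ} (hn : N ≤ n) (hl : N ≤ l) : F n l = F N N := by
    refine le_antisymm ((hleft l hn).trans (hright N hl)) ?_
    rw [← hN (max n l) (by lia)]
    exact (hleft _ (le_max_left n l)).trans (hright n (le_max_right n l))
  choose k hk using fun n ↦ stabilizes (F n) (hright n)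
  refine ⟨max N ((Finset.range N).sup k), fun n l hl ↦ ?_⟩
  rcases le_or_gt N n with hn | hn
  · rw [hlarge hn (by lia), hlarge hn (by lia)]
  · have : k n ≤ (Finset.range N).sup k := Finset.le_sup (Finset.mem_range.2 hn)
    exact (hk n l (by lia)).trans (hk n _ (by lia)).symm

section Artinian

variable {R : Type*} [CommRing R] {A : Type*} [AddCommGroup A] [Module R A]

theorem isArtinian_iff_antitone_stabilizes :
    IsArtinian R A ↔ ∀ Y : ℕ → Submodule R A, Antitone Y → ∃ k, ∀ l ≥ k, Y l = Y k := by
  rw [← monotone_stabilizes_iff_artinian]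
  refine ⟨fun h Y hY ↦ ?_, fun h f ↦ ?_⟩
  · obtain ⟨k, hk⟩ := h ⟨fun n ↦ OrderDual.toDual (Y n), fun _ _ h ↦ hY h⟩
    exact ⟨k, fun l hl ↦ (hk l hl).symm⟩
  · obtain ⟨k, hk⟩ := h (fun n ↦ OrderDual.ofDual (f n)) fun _ _ h ↦ f.2 h
    exact ⟨k, fun l hl ↦ (hk l hl).symm⟩

/-- The submodule `xⁿY ∩ ker x` of `ker x`. -/
def powSMulTorsion (x : R) (n : ℕ) (Y : Submodule R A) :
    Submodule R (Submodule.torsionBy R A x) :=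
  (Y.map (LinearMap.lsmul R A (x ^ n))).comap (Submodule.torsionBy R A x).subtype

theorem mem_powSMulTorsion {x : R} {n : ℕ} {Y : Submodule R A}
    {k : Submodule.torsionBy R A x} :
    k ∈ powSMulTorsion x n Y ↔ ∃ y ∈ Y, x ^ n • y = (k : A) :=
  Iff.rfl

theorem powSMulTorsion_mono (x : R) (n : ℕ) :
    Monotone (powSMulTorsion x n : Submodule R A → _) :=
  fun _ _ h ↦ Submodule.comap_mono (Submodule.map_mono h)

theorem powSMulTorsion_antitone (x : R) (Y : Submodule R A) :
    Antitone (powSMulTorsion x · Y) := by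
  rintro m n hmn k ⟨y, hy, hyk⟩
  refine ⟨x ^ (n - m) • y, Y.smul_mem _ hy, ?_⟩
  rw [← hyk, LinearMap.lsmul_apply, LinearMap.lsmul_apply, smul_smul, ← pow_add,
    Nat.add_sub_cancel' hmn]

theorem le_of_powSMulTorsion_le {x : R} (hx : ∀ m : A, ∃ n : ℕ, x ^ n • m = 0)
    {Y Z : Submodule R A} (hZY : Z ≤ Y)
    (h : ∀ n, powSMulTorsion x n Y ≤ powSMulTorsion x n Z) : Y ≤ Z := by
  intro y hy
  obtain ⟨n, hn⟩ := hx y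
  induction n generalizing y with
  | zero =>
    rw [pow_zero, one_smul] at hn
    exact hn ▸ zero_mem Z
  | succ n ih =>
    have hmem : x ^ n • y ∈ Submodule.torsionBy R A x := by
      rw [Submodule.mem_torsionBy_iff, smul_smul, ← pow_succ', hn]
    obtain ⟨z, hz, hzy⟩ :=
      mem_powSMulTorsion.1 (h n (mem_powSMulTorsion.2 ⟨y, hy, rfl⟩ : ⟨_, hmem⟩ ∈ _))
    have := ih (y := y - z) (sub_mem hy (hZY hz)) (by rw [smul_sub, hzy, sub_self])
    simpa using add_mem this hz

theorem isArtinian_of_torsionBy (x : R) (hx : ∀ m : A, ∃ n : ℕ, x ^ n • m = 0)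
    [IsArtinian R (Submodule.torsionBy R A x)] : IsArtinian R A := by
  refine isArtinian_iff_antitone_stabilizes.2 fun Y hY ↦ ?_
  obtain ⟨k, hk⟩ := exists_forall_ge_eq_of_antitone (fun n l ↦ powSMulTorsion x n (Y l))
    (fun l ↦ powSMulTorsion_antitone x (Y l)) fun n _ _ h ↦ powSMulTorsion_mono x n (hY h)
  exact ⟨k, fun l hl ↦ le_antisymm (hY hl)
    (le_of_powSMulTorsion_le hx (hY hl) fun n ↦ (hk n l hl).ge)⟩

theorem isArtinian_of_torsionBySet_finset (s : Finset R)
    (hs : ∀ x ∈ s, ∀ m : A, ∃ n : ℕ, x ^ n • m = 0)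
    (h : IsArtinian R (Submodule.torsionBySet R A (s : Set R))) : IsArtinian R A := by
  classical
  induction s using Finset.induction_on with
  | empty =>
    refine isArtinian_of_surjective _
      (Submodule.torsionBySet R A ((∅ : Finset R) : Set R)).subtype fun m ↦ ⟨⟨m, ?_⟩, rfl⟩
    simp only [Finset.coe_empty, Submodule.mem_torsionBySet_iff, IsEmpty.forall_iff]
  | insert x s _ ih =>
    refine ih (fun y hy ↦ hs y (Finset.mem_insert_of_mem hy)) ?_
    have : IsArtinian R
        (Submodule.torsionBy R (Submodule.torsionBySet R A (s : Set R)) x) := by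
      refine isArtinian_of_injective
        (P := Submodule.torsionBySet R A ((insert x s : Finset R) : Set R))
        ((Submodule.subtype _ ∘ₗ Submodule.subtype _).codRestrict _ fun m ↦ ?_)
        ((LinearMap.injective_codRestrict_iff _).2
          ((Submodule.injective_subtype _).comp (Submodule.injective_subtype _)))
      refine (Submodule.mem_torsionBySet_iff _ _).2 fun ⟨a, ha⟩ ↦ ?_
      rcases Finset.mem_insert.1 ha with rfl | ha
      · exact congrArg Subtype.val ((Submodule.mem_torsionBy_iff _ _).1 m.2)
      · exact (Submodule.mem_torsionBySet_iff _ _).1 m.1.2 ⟨a, ha⟩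
    exact isArtinian_of_torsionBy x fun m ↦
      (hs x (Finset.mem_insert_self x s) m).imp fun n hn ↦ Subtype.ext hn

theorem isArtinian_of_isTorsionBySet {J : Ideal R} [IsArtinianRing (R ⧸ J)] [Module.Finite R A]
    (hA : Module.IsTorsionBySet R A (J : Set R)) : IsArtinian R A := by
  let _ := hA.module
  have : IsScalarTower R (R ⧸ J) A := hA.isScalarTower
  have : Module.Finite (R ⧸ J) A := Module.Finite.of_restrictScalars_finite R _ _
  have : IsArtinian (R ⧸ J) A := inferInstance
  exact isArtinian_of_surjective_algebraMap (R := R ⧸ J) (S := R) Ideal.Quotient.mk_surjective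

end Artinian

section Secondary

variable {R : Type*} [CommRing R] {A : Type*} [AddCommGroup A] [Module R A]

variable (R A) in
/-- A secondary module: it is nonzero and every ring element acts on it surjectively or
nilpotently. This is dual to the quotient by a primary submodule. -/
structure IsSecondary : Prop where
  nontrivial : Nontrivial A
  surjective_or_isNilpotent (r : R) :
    Function.Surjective (algebraMap R (Module.End R A) r) ∨
      IsNilpotent (algebraMap R (Module.End R A) r)

theorem mem_radical_annihilator_iff {r : R} :
    r ∈ (Module.annihilator R A).radical ↔ IsNilpotent (algebraMap R (Module.End R A) r) := by
  simp only [Ideal.mem_radical_iff, IsNilpotent, ← map_pow, Module.mem_annihilator,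
    LinearMap.ext_iff, Module.algebraMap_end_apply, LinearMap.zero_apply]

theorem IsSecondary.isPrime_radical_annihilator (h : IsSecondary R A) :
    (Module.annihilator R A).radical.IsPrime := by
  have := h.nontrivial
  refine ⟨fun htop ↦ ?_, fun {x y} hxy ↦ or_iff_not_imp_left.2 fun hx ↦ ?_⟩
  · have hone := mem_radical_annihilator_iff.1 ((Ideal.eq_top_iff_one _).1 htop)
    exact not_isNilpotent_one (map_one (algebraMap R (Module.End R A)) ▸ hone)
  · rw [mem_radical_annihilator_iff] at hx hxy ⊢
    obtain ⟨n, hn⟩ := hxy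
    have hsurj : Function.Surjective (algebraMap R (Module.End R A) x ^ n) := by
      rw [Module.End.coe_pow]
      exact ((h.surjective_or_isNilpotent x).resolve_right hx).iterate n
    refine ⟨n, LinearMap.ext fun a ↦ ?_⟩
    obtain ⟨b, rfl⟩ := hsurj a
    rw [← Module.End.mul_apply, ← map_pow, ← map_pow, ← map_mul, ← mul_pow, mul_comm, map_pow, hn]
    rfl

theorem IsSecondary.of_supIrred_top [IsArtinian R A] (h : SupIrred (⊤ : Submodule R A)) :
    IsSecondary R A := by
  have : Nontrivial A := by
    by_contra hA
    rw [not_nontrivial_iff_subsingleton] at hA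
    exact h.ne_bot (Subsingleton.elim _ _)
  refine ⟨this, fun r ↦ ?_⟩
  set f := algebraMap R (Module.End R A) r
  obtain ⟨N, hN⟩ := Filter.eventually_atTop.1 f.eventually_codisjoint_ker_pow_range_pow
  rcases h.2 (hN (N + 1) N.le_succ).eq_top with hker | hrange
  · exact .inr ⟨N + 1, LinearMap.ker_eq_top.1 hker⟩
  · refine .inl (Function.Surjective.of_comp (g := ⇑(f ^ N)) ?_)
    rw [← Module.End.coe_mul, ← pow_succ']
    exact LinearMap.range_eq_top.1 hrange

theorem supIrred_top_of_supIrred {W : Submodule R A} (h : SupIrred W) :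
    SupIrred (⊤ : Submodule R W) := by
  have := Submodule.nontrivial_iff_ne_bot.2 h.ne_bot
  refine ⟨fun hmin ↦ top_ne_bot hmin.eq_bot, fun U V hUV ↦ ?_⟩
  have hmap : U.map W.subtype ⊔ V.map W.subtype = W := by
    rw [← Submodule.map_sup, hUV, Submodule.map_subtype_top]
  have hinj := Submodule.map_injective_of_injective W.injective_subtype
  exact (h.2 hmap).imp (fun hU ↦ hinj (hU.trans W.map_subtype_top.symm))
    fun hV ↦ hinj (hV.trans W.map_subtype_top.symm)

variable (R A) in
theorem exists_finset_isSecondary_sup_eq_top [IsArtinian R A] :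
    ∃ t : Finset (Submodule R A), t.sup id = ⊤ ∧ ∀ W ∈ t, IsSecondary R W :=
  (exists_supIrred_decomposition (⊤ : Submodule R A)).imp fun _ ht ↦
    ⟨ht.1, fun _ hW ↦ .of_supIrred_top (supIrred_top_of_supIrred (ht.2 hW))⟩

theorem IsSecondary.le_range_lsmul {W : Submodule R A} (h : IsSecondary R W) {x : R}
    (hx : x ∉ (Module.annihilator R W).radical) : W ≤ LinearMap.range (LinearMap.lsmul R A x) := by
  intro w hw
  obtain ⟨v, hv⟩ := (h.surjective_or_isNilpotent x).resolve_right
    (hx ∘ mem_radical_annihilator_iff.2) ⟨w, hw⟩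
  exact ⟨v, congrArg Subtype.val hv⟩

theorem fg_of_le_radical_annihilator [IsNoetherianRing R] {𝔞 : Ideal R} {W : Submodule R A}
    (hfin : ∀ n : ℕ, Module.Finite R (Submodule.torsionBySet R A ((𝔞 ^ n : Ideal R) : Set R)))
    (h : 𝔞 ≤ (Module.annihilator R W).radical) : W.FG := by
  obtain ⟨n, hn⟩ := Ideal.exists_pow_le_of_le_radical_of_fg h (IsNoetherian.noetherian 𝔞)
  have hle : W ≤ Submodule.torsionBySet R A ((𝔞 ^ n : Ideal R) : Set R) := fun w hw ↦
    (Submodule.mem_torsionBySet_iff _ _).2 fun a ↦ Submodule.mem_annihilator.1 (hn a.2) w hw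
  have := hfin n
  have : IsNoetherian R W := isNoetherian_of_le hle
  exact Module.Finite.iff_fg.1 inferInstance

/-- Melkersson: up to a finitely generated submodule, an Artinian module with finitely generated
`𝔞`-power torsion is divisible by every element avoiding finitely many primes not containing `𝔞`. -/
theorem exists_finset_isPrime_sup_range_lsmul_eq_top [IsNoetherianRing R] [IsArtinian R A]
    {𝔞 : Ideal R}
    (hfin : ∀ n : ℕ, Module.Finite R (Submodule.torsionBySet R A ((𝔞 ^ n : Ideal R) : Set R))) :
    ∃ (s : Finset (Ideal R)) (L : Submodule R A), (∀ q ∈ s, q.IsPrime ∧ ¬ 𝔞 ≤ q) ∧ L.FG ∧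
      ∀ x : R, (∀ q ∈ s, x ∉ q) → L ⊔ LinearMap.range (LinearMap.lsmul R A x) = ⊤ := by
  classical
  obtain ⟨t, ht, hsec⟩ := exists_finset_isSecondary_sup_eq_top R A
  let q (W : Submodule R A) : Ideal R := (Module.annihilator R W).radical
  refine ⟨(t.filter (¬ 𝔞 ≤ q ·)).image q, (t.filter (𝔞 ≤ q ·)).sup id, ?_, ?_, fun x hx ↦ ?_⟩
  · simp only [Finset.mem_image, Finset.mem_filter]
    rintro _ ⟨W, ⟨hWt, hW⟩, rfl⟩
    exact ⟨(hsec W hWt).isPrime_radical_annihilator, hW⟩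
  · exact Submodule.fg_finset_sup _ _ fun W hW ↦
      fg_of_le_radical_annihilator hfin (Finset.mem_filter.1 hW).2
  · rw [eq_top_iff, ← ht]
    refine Finset.sup_le fun W hWt ↦ ?_
    by_cases hW : 𝔞 ≤ q W
    · exact le_sup_of_le_left (Finset.le_sup (f := id) (Finset.mem_filter.2 ⟨hWt, hW⟩))
    · exact le_sup_of_le_right ((hsec W hWt).le_range_lsmul
        (hx _ (Finset.mem_image_of_mem q (Finset.mem_filter.2 ⟨hWt, hW⟩))))

end Secondary

section ExtFinite

theorem finite_of_ker_le_range {R A B C : Type*} [CommRing R] [IsNoetherianRing R]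
    [AddCommGroup A] [AddCommGroup B] [AddCommGroup C] [Module R A] [Module R B] [Module R C]
    [Module.Finite R A] [Module.Finite R C] (f : A →ₗ[R] B) (g : B →ₗ[R] C)
    (h : LinearMap.ker g ≤ LinearMap.range f) : Module.Finite R B := by
  have : IsNoetherian R (LinearMap.ker g) := isNoetherian_of_le h
  have := isNoetherian_of_range_eq_ker (LinearMap.ker g).subtype g (Submodule.range_subtype _)
  infer_instance

variable {R : Type*} [CommRing R] {C : Type*} [Category C] [Abelian C] [Linear R C]
  [HasExt.{u} C]

section Retract

variable {A B : C} (X : C) {n : ℕ}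

theorem finite_ext_of_retract_right (r : Retract B A) [Module.Finite R (Abelian.Ext X A n)] :
    Module.Finite R (Abelian.Ext X B n) := by
  refine Module.Finite.of_surjective
    ((Abelian.Ext.mk₀ r.r).postcompOfLinear R X (add_zero n))
    fun α ↦ ⟨α.comp (Abelian.Ext.mk₀ r.i) (add_zero n), ?_⟩
  refine (Abelian.Ext.comp_assoc_of_second_deg_zero _ _ _ (add_zero n)).trans ?_
  rw [Abelian.Ext.mk₀_comp_mk₀, r.retract, Abelian.Ext.comp_mk₀_id]

theorem finite_ext_of_retract_left (r : Retract B A) [Module.Finite R (Abelian.Ext A X n)] :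
    Module.Finite R (Abelian.Ext B X n) := by
  refine Module.Finite.of_surjective
    ((Abelian.Ext.mk₀ r.i).precompOfLinear R X (zero_add n))
    fun α ↦ ⟨(Abelian.Ext.mk₀ r.r).comp α (zero_add n), ?_⟩
  refine (Abelian.Ext.comp_assoc_of_second_deg_zero _ _ _ (zero_add n)).symm.trans ?_
  rw [Abelian.Ext.mk₀_comp_mk₀, r.retract, Abelian.Ext.mk₀_id_comp]

end Retract

theorem ext_smul_eq_zero {X Y : C} {x : R} (hx : x • 𝟙 X = 0) {n : ℕ} (α : Abelian.Ext X Y n) :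
    x • α = 0 := by
  rw [← Abelian.Ext.mk₀_id_comp α, ← Abelian.Ext.smul_comp, ← Abelian.Ext.mk₀_smul, hx,
    Abelian.Ext.mk₀_zero, Abelian.Ext.zero_comp]

variable (R) in
theorem injective_postcomp_mk₀ (X : C) {Y Z : C} (f : Y ⟶ Z) [Mono f] :
    Function.Injective ((Abelian.Ext.mk₀ f).postcompOfLinear R X (add_zero 0)) := by
  refine (injective_iff_map_eq_zero _).2 fun α hα ↦ ?_
  obtain ⟨φ, rfl⟩ := (Abelian.Ext.mk₀_bijective X Y).2 α
  replace hα : (Abelian.Ext.mk₀ φ).comp (Abelian.Ext.mk₀ f) (add_zero 0) = 0 := hα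
  rw [Abelian.Ext.mk₀_comp_mk₀, Abelian.Ext.mk₀_eq_zero_iff] at hα
  rw [Abelian.Ext.mk₀_eq_zero_iff, ← cancel_mono f, hα, Limits.zero_comp]

variable (R) in
theorem injective_precomp_mk₀ (X : C) {Y Z : C} (f : Y ⟶ Z) [Epi f] :
    Function.Injective ((Abelian.Ext.mk₀ f).precompOfLinear R X (zero_add 0)) := by
  refine (injective_iff_map_eq_zero _).2 fun α hα ↦ ?_
  obtain ⟨φ, rfl⟩ := (Abelian.Ext.mk₀_bijective Z X).2 α
  replace hα : (Abelian.Ext.mk₀ f).comp (Abelian.Ext.mk₀ φ) (zero_add 0) = 0 := hα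
  rw [Abelian.Ext.mk₀_comp_mk₀, Abelian.Ext.mk₀_eq_zero_iff] at hα
  rw [Abelian.Ext.mk₀_eq_zero_iff, ← cancel_epi f, hα, Limits.comp_zero]

variable [IsNoetherianRing R]

section ShortExact

variable {S : ShortComplex C} (hS : S.ShortExact) {X : C} {n : ℕ}
include hS

theorem finite_ker_postcomp_of_shortExact
    (h₃ : ∀ m, m + 1 = n → Module.Finite R (Abelian.Ext X S.X₃ m)) :
    Module.Finite R
      (LinearMap.ker ((Abelian.Ext.mk₀ S.f).postcompOfLinear R X (add_zero n))) := by
  rcases n with _ | n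
  · have := hS.mono_f
    rw [LinearMap.ker_eq_bot.2 (injective_postcomp_mk₀ R X S.f)]
    infer_instance
  · have := h₃ n rfl
    have hle : LinearMap.ker ((Abelian.Ext.mk₀ S.f).postcompOfLinear R X (add_zero (n + 1))) ≤
        LinearMap.range (hS.extClass.postcompOfLinear R X rfl) :=
      fun α hα ↦ Abelian.Ext.covariant_sequence_exact₁ X hS α hα rfl
    have := isNoetherian_of_le hle
    infer_instance

theorem finite_ext_X₁ (h₃ : ∀ m, m + 1 = n → Module.Finite R (Abelian.Ext X S.X₃ m))
    (h₂ : Module.Finite R (Abelian.Ext X S.X₂ n)) : Module.Finite R (Abelian.Ext X S.X₁ n) := by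
  have := finite_ker_postcomp_of_shortExact hS h₃
  exact finite_of_ker_le_range (Submodule.subtype _)
    ((Abelian.Ext.mk₀ S.f).postcompOfLinear R X (add_zero n)) (Submodule.range_subtype _).ge

theorem finite_ext_X₂ (_ : Module.Finite R (Abelian.Ext X S.X₁ n))
    (_ : Module.Finite R (Abelian.Ext X S.X₃ n)) : Module.Finite R (Abelian.Ext X S.X₂ n) :=
  finite_of_ker_le_range ((Abelian.Ext.mk₀ S.f).postcompOfLinear R X (add_zero n))
    ((Abelian.Ext.mk₀ S.g).postcompOfLinear R X (add_zero n))
    fun α hα ↦ Abelian.Ext.covariant_sequence_exact₂ X hS α hα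

theorem finite_ext_X₃ (_ : Module.Finite R (Abelian.Ext X S.X₂ n))
    (_ : Module.Finite R (Abelian.Ext X S.X₁ (n + 1))) :
    Module.Finite R (Abelian.Ext X S.X₃ n) :=
  finite_of_ker_le_range ((Abelian.Ext.mk₀ S.g).postcompOfLinear R X (add_zero n))
    (hS.extClass.postcompOfLinear R X rfl)
    fun α hα ↦ Abelian.Ext.covariant_sequence_exact₃ X hS α rfl hα

theorem finite_ext_X₂_contra (_ : Module.Finite R (Abelian.Ext S.X₁ X n))
    (_ : Module.Finite R (Abelian.Ext S.X₃ X n)) : Module.Finite R (Abelian.Ext S.X₂ X n) :=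
  finite_of_ker_le_range ((Abelian.Ext.mk₀ S.g).precompOfLinear R X (zero_add n))
    ((Abelian.Ext.mk₀ S.f).precompOfLinear R X (zero_add n))
    fun α hα ↦ Abelian.Ext.contravariant_sequence_exact₂ hS X α hα

theorem finite_ext_X₃_contra (h₁ : ∀ m, m + 1 = n → Module.Finite R (Abelian.Ext S.X₁ X m))
    (h₂ : Module.Finite R (Abelian.Ext S.X₂ X n)) : Module.Finite R (Abelian.Ext S.X₃ X n) := by
  rcases n with _ | n
  · have := hS.epi_g
    exact Module.Finite.of_injective _ (injective_precomp_mk₀ R X S.g)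
  · have := h₁ n rfl
    exact finite_of_ker_le_range (hS.extClass.precompOfLinear R X (add_comm 1 n))
      ((Abelian.Ext.mk₀ S.g).precompOfLinear R X (zero_add _))
      fun α hα ↦ Abelian.Ext.contravariant_sequence_exact₃ hS X α hα (add_comm 1 n)

end ShortExact

/-- Melkersson: finiteness of `Extⁿ(X, A)` can be checked on the kernel `K` and the cokernel `Q` of
an endomorphism `x` of `A` if `x` kills `X`, since then it also kills `Extⁿ(X, A)`. -/
theorem finite_ext_of_ker_of_coker {X K A I Q : C} {i : K ⟶ A} {p : A ⟶ I} {j : I ⟶ A} {q : A ⟶ Q}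
    {hip : i ≫ p = 0} {hjq : j ≫ q = 0} (hS : (ShortComplex.mk i p hip).ShortExact)
    (hT : (ShortComplex.mk j q hjq).ShortExact) {x : R} (hpj : p ≫ j = x • 𝟙 A)
    (hx : x • 𝟙 X = 0) (hK : ∀ n, Module.Finite R (Abelian.Ext X K n))
    (hQ : ∀ n, Module.Finite R (Abelian.Ext X Q n)) (n : ℕ) :
    Module.Finite R (Abelian.Ext X A n) := by
  have hI : Module.Finite R (Abelian.Ext X I n) := by
    have := finite_ker_postcomp_of_shortExact hT (n := n) fun m _ ↦ hQ m
    have := hK (n + 1)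
    refine finite_of_ker_le_range
      (LinearMap.ker ((Abelian.Ext.mk₀ j).postcompOfLinear R X (add_zero n))).subtype
      (hS.extClass.postcompOfLinear R X rfl) fun α hα ↦ ?_
    obtain ⟨β, rfl⟩ := Abelian.Ext.covariant_sequence_exact₃ X hS α rfl hα
    refine ⟨⟨_, LinearMap.mem_ker.2 ?_⟩, rfl⟩
    change (β.comp (Abelian.Ext.mk₀ p) (add_zero n)).comp (Abelian.Ext.mk₀ j) (add_zero n) = 0
    rw [Abelian.Ext.comp_assoc_of_second_deg_zero, Abelian.Ext.mk₀_comp_mk₀, hpj,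
      ← Abelian.Ext.smul_eq_comp_mk₀]
    exact ext_smul_eq_zero hx β
  exact finite_ext_X₂ hS (hK n) hI

end ExtFinite

section ModuleExt

variable {R : Type u} [CommRing R]

variable (R) in
/-- `Extⁿ_R(N, M)` is a finitely generated `R`-module. -/
abbrev FinExt (N M : Type u) [AddCommGroup N] [Module R N] [AddCommGroup M] [Module R M]
    (n : ℕ) : Prop :=
  Module.Finite R (Abelian.Ext (ModuleCat.of R N) (ModuleCat.of R M) n)

variable {A B C : Type u} [AddCommGroup A] [AddCommGroup B] [AddCommGroup C]
  [Module R A] [Module R B] [Module R C]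

theorem shortExact_of_exact {f : A →ₗ[R] B} {g : B →ₗ[R] C} (h : Function.Exact f g)
    (hf : Function.Injective f) (hg : Function.Surjective g) :
    (ModuleCat.shortComplexOfCompEqZero f g h.linearMap_comp_eq_zero).ShortExact :=
  ModuleCat.shortComplex_shortExact _ h hf hg

theorem shortExact_submodule (L : Submodule R A) :
    (ModuleCat.shortComplexOfCompEqZero L.subtype L.mkQ
      (LinearMap.exact_subtype_mkQ L).linearMap_comp_eq_zero).ShortExact :=
  shortExact_of_exact (LinearMap.exact_subtype_mkQ L) L.injective_subtype L.mkQ_surjective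

theorem exact_subtype_ker_rangeRestrict (f : A →ₗ[R] B) :
    Function.Exact (LinearMap.ker f).subtype f.rangeRestrict := by
  rw [LinearMap.exact_iff, LinearMap.ker_rangeRestrict, Submodule.range_subtype]

theorem shortExact_ker_range (f : A →ₗ[R] B) :
    (ModuleCat.shortComplexOfCompEqZero (LinearMap.ker f).subtype f.rangeRestrict
      (exact_subtype_ker_rangeRestrict f).linearMap_comp_eq_zero).ShortExact :=
  shortExact_of_exact (exact_subtype_ker_rangeRestrict f) (Submodule.injective_subtype _)
    f.surjective_rangeRestrict

theorem shortExact_of_injective {f : A →ₗ[R] B} (hf : Function.Injective f) :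
    (ModuleCat.shortComplexOfCompEqZero f (LinearMap.range f).mkQ
      (LinearMap.exact_map_mkQ_range f).linearMap_comp_eq_zero).ShortExact :=
  shortExact_of_exact (LinearMap.exact_map_mkQ_range f) hf (Submodule.mkQ_surjective _)

theorem smul_id_eq_zero {x : R} (hx : x ∈ Module.annihilator R A) :
    x • 𝟙 (ModuleCat.of R A) = 0 :=
  ModuleCat.hom_ext (LinearMap.ext (Module.mem_annihilator.1 hx))

/-- Homomorphisms from `R ⧸ 𝔞`, identified with elements killed by `𝔞` through the image of `1`. -/
noncomputable def quotientHomEquivTorsionBySet (𝔞 : Ideal R) (M : Type*) [AddCommGroup M]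
    [Module R M] : ((R ⧸ 𝔞) →ₗ[R] M) ≃ₗ[R] Submodule.torsionBySet R M (𝔞 : Set R) :=
  LinearEquiv.ofBijective
    ((LinearMap.applyₗ (Submodule.Quotient.mk 1 : R ⧸ 𝔞)).codRestrict _ fun φ ↦ by
      refine (Submodule.mem_torsionBySet_iff _ _).2 fun ⟨a, ha⟩ ↦ ?_
      rw [LinearMap.applyₗ_apply_apply, ← map_smul, ← Submodule.Quotient.mk_smul, smul_eq_mul,
        mul_one, (Submodule.Quotient.mk_eq_zero 𝔞).2 ha, map_zero])
    ⟨(LinearMap.injective_codRestrict_iff _).2 fun _ _ h ↦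
        Submodule.linearMap_qext 𝔞 (LinearMap.ext_ring h),
      fun m ↦ ⟨Submodule.liftQ 𝔞 (LinearMap.toSpanSingleton R M m) fun a ha ↦
          (Submodule.mem_torsionBySet_iff _ _).1 m.2 ⟨a, ha⟩,
        Subtype.ext (one_smul R _)⟩⟩

variable (A) in
/-- `Hom(R ⧸ 𝔞, A)`, as the degree-zero `Ext`, identified with the elements killed by `𝔞`. -/
noncomputable def extZeroEquivTorsionBySet (𝔞 : Ideal R) :
    Abelian.Ext (ModuleCat.of R (R ⧸ 𝔞)) (ModuleCat.of R A) 0 ≃ₗ[R]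
      Submodule.torsionBySet R A (𝔞 : Set R) :=
  Abelian.Ext.linearEquiv₀ (R := R) ≪≫ₗ ModuleCat.homLinearEquiv (S := R) ≪≫ₗ
    quotientHomEquivTorsionBySet 𝔞 A

theorem coe_extZeroEquivTorsionBySet_mk₀ {𝔞 : Ideal R}
    (φ : ModuleCat.of R (R ⧸ 𝔞) ⟶ ModuleCat.of R A) :
    (extZeroEquivTorsionBySet A 𝔞 (Abelian.Ext.mk₀ φ) : A) = φ.hom (Submodule.Quotient.mk 1) :=
  congrArg (fun ψ ↦ (quotientHomEquivTorsionBySet 𝔞 A (ModuleCat.homLinearEquiv (S := R) ψ) : A))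
    ((Abelian.Ext.linearEquiv₀ (R := R)).apply_symm_apply φ)

theorem finExt_zero_iff {𝔞 : Ideal R} :
    FinExt R (R ⧸ 𝔞) A 0 ↔ Module.Finite R (Submodule.torsionBySet R A (𝔞 : Set R)) :=
  Module.Finite.equiv_iff (extZeroEquivTorsionBySet A 𝔞)

theorem finite_of_finExt_zero {𝔞 : Ideal R} (h : 𝔞 ≤ Module.annihilator R A)
    (h0 : FinExt R (R ⧸ 𝔞) A 0) : Module.Finite R A := by
  have := finExt_zero_iff.1 h0
  exact Module.Finite.of_surjective (Submodule.torsionBySet R A (𝔞 : Set R)).subtype fun x ↦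
    ⟨⟨x, (Submodule.mem_torsionBySet_iff _ _).2 fun a ↦ Module.mem_annihilator.1 (h a.2) x⟩, rfl⟩

theorem FinExt.congr_left (e : A ≃ₗ[R] B) {n : ℕ} (_ : FinExt R A C n) : FinExt R B C n :=
  finite_ext_of_retract_left _ (Retract.ofIso e.symm.toModuleIso)

theorem FinExt.congr_right (e : A ≃ₗ[R] B) {n : ℕ} (_ : FinExt R C A n) : FinExt R C B n :=
  finite_ext_of_retract_right _ (Retract.ofIso e.symm.toModuleIso)

variable [IsNoetherianRing R]

theorem FinExt.of_finite [Module.Finite R A] [Module.Finite R B] (n : ℕ) : FinExt R A B n :=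
  inferInstance

theorem FinExt.quotient_of_fg [Module.Finite R B] {L : Submodule R A} (hL : L.FG) {n : ℕ}
    (h : FinExt R B A n) : FinExt R B (A ⧸ L) n :=
  have := Module.Finite.iff_fg.2 hL
  finite_ext_X₃ (shortExact_submodule L) h (FinExt.of_finite (n + 1))

theorem FinExt.of_quotient_of_fg [Module.Finite R B] {L : Submodule R A} (hL : L.FG) {n : ℕ}
    (h : FinExt R B (A ⧸ L) n) : FinExt R B A n :=
  have := Module.Finite.iff_fg.2 hL
  finite_ext_X₂ (shortExact_submodule L) (FinExt.of_finite n) h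

theorem FinExt.submodule_zero (L : Submodule R A) (h : FinExt R B A 0) : FinExt R B L 0 :=
  finite_ext_X₁ (shortExact_submodule L) (by simp) h

theorem FinExt.submodule_one (L : Submodule R A) (h0 : FinExt R B (A ⧸ L) 0)
    (h1 : FinExt R B A 1) : FinExt R B L 1 :=
  finite_ext_X₁ (shortExact_submodule L) (fun _ hm ↦ by rwa [Nat.succ.inj hm]) h1

theorem FinExt.of_ker_of_coker_lsmul {x : R} (hx : x ∈ Module.annihilator R B)
    (hK : ∀ n, FinExt R B (LinearMap.ker (LinearMap.lsmul R A x)) n)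
    (hQ : ∀ n, FinExt R B (A ⧸ LinearMap.range (LinearMap.lsmul R A x)) n) (n : ℕ) :
    FinExt R B A n :=
  finite_ext_of_ker_of_coker (shortExact_ker_range (LinearMap.lsmul R A x))
    (shortExact_submodule (LinearMap.range (LinearMap.lsmul R A x))) rfl (smul_id_eq_zero hx)
    hK hQ n

theorem FinExt.of_forall_isPrime {𝔞 : Ideal R} {n : ℕ}
    (hA : ∀ p : Ideal R, p.IsPrime → 𝔞 ≤ p → FinExt R (R ⧸ p) A n) [hB : Module.Finite R B]
    {k : ℕ} (hk : 𝔞 ^ k ≤ Module.annihilator R B) : FinExt R B A n := by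
  induction hB using IsNoetherianRing.induction_on_isQuotientEquivQuotientPrime R with
  | subsingleton N =>
    have h1 : (1 : R) • 𝟙 (ModuleCat.of R N) = 0 :=
      smul_id_eq_zero (Module.mem_annihilator.2 fun _ ↦ Subsingleton.elim _ _)
    have : Subsingleton (Abelian.Ext (ModuleCat.of R N) (ModuleCat.of R A) n) :=
      subsingleton_of_forall_eq 0 fun α ↦ one_smul R α ▸ ext_smul_eq_zero h1 α
    exact inferInstance
  | quotient N p e =>
    rw [e.annihilator_eq, Ideal.annihilator_quotient] at hk
    exact FinExt.congr_left e.symm (hA _ p.2 (p.2.le_of_pow_le hk))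
  | exact N₁ N₂ N₃ f g hf hg hfg h₁ h₃ =>
    exact finite_ext_X₂_contra (shortExact_of_exact hfg hf hg)
      (h₁ (hk.trans (f.annihilator_le_of_injective hf)))
      (h₃ (hk.trans (g.annihilator_le_of_surjective hg)))

theorem FinExt.of_pow_le_annihilator {𝔞 : Ideal R} {n : ℕ}
    (hA : ∀ i ≤ n, FinExt R (R ⧸ 𝔞) A i) [Module.Finite R B] {k : ℕ}
    (hk : 𝔞 ^ k ≤ Module.annihilator R B) : FinExt R B A n := by
  induction n using Nat.strong_induction_on generalizing B k with
  | _ n ih =>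
  refine FinExt.of_forall_isPrime (fun p _ hp ↦ ?_) hk
  have hker : 𝔞 ^ 1 ≤ Module.annihilator R (LinearMap.ker (Submodule.factor hp)) := by
    rw [pow_one]
    refine (Ideal.annihilator_quotient (I := 𝔞)).ge.trans ?_
    exact (LinearMap.ker _).subtype.annihilator_le_of_injective (Submodule.injective_subtype _)
  refine finite_ext_X₃_contra
    (LinearMap.shortExact_shortComplexKer (Submodule.factor_surjective hp))
    (fun m hm ↦ ih m (by lia) (fun i hi ↦ hA i (by lia)) hker) (hA n le_rfl)

theorem FinExt.of_le_radical {𝔞 𝔟 : Ideal R} {n : ℕ} (hA : ∀ i ≤ n, FinExt R (R ⧸ 𝔞) A i)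
    (h : 𝔞 ≤ 𝔟.radical) : FinExt R (R ⧸ 𝔟) A n := by
  obtain ⟨k, hk⟩ := Ideal.exists_pow_le_of_le_radical_of_fg h (IsNoetherian.noetherian 𝔞)
  exact FinExt.of_pow_le_annihilator hA (by rwa [Ideal.annihilator_quotient])

end ModuleExt

section Artinian

variable {R : Type u} [CommRing R] {𝔞 c : Ideal R} {A : Type u} [AddCommGroup A] [Module R A]

theorem exists_mem_notMem_of_isPrime (s : Finset (Ideal R)) (hs : ∀ q ∈ s, q.IsPrime ∧ ¬ 𝔞 ≤ q)
    (hc : ¬ 𝔞 ≤ c) : ∃ x ∈ 𝔞, x ∉ c ∧ ∀ q ∈ s, x ∉ q := by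
  classical
  have hunion := (Ideal.subset_union_prime (f := id) (s := insert c s) (I := 𝔞) c c
    fun q hq hqc _ ↦ (hs q ((Finset.mem_insert.1 hq).resolve_left hqc)).1).not.2 fun ⟨q, hq, hle⟩ ↦
      (Finset.mem_insert.1 hq).elim (fun h ↦ hc (h ▸ hle)) fun h ↦ (hs q h).2 hle
  obtain ⟨x, hxa, hx⟩ := Set.not_subset.1 hunion
  simp only [id, Finset.coe_insert, Set.mem_insert_iff, Set.iUnion_iUnion_eq_or_left,
    Set.mem_union, Set.mem_iUnion, SetLike.mem_coe, not_or, not_exists] at hx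
  exact ⟨x, hxa, hx⟩

theorem sup_span_le_annihilator_ker_lsmul (h : c ≤ Module.annihilator R A) (x : R) :
    c ⊔ Ideal.span {x} ≤ Module.annihilator R (LinearMap.ker (LinearMap.lsmul R A x)) := by
  refine sup_le (h.trans (LinearMap.annihilator_le_of_injective _
    (Submodule.injective_subtype _))) ?_
  rw [Ideal.span_singleton_le_iff_mem, Module.mem_annihilator]
  exact fun m ↦ Subtype.ext m.2

theorem finite_quotient_of_sup_eq_top {L N : Submodule R A} (hL : L.FG) (h : L ⊔ N = ⊤) :
    Module.Finite R (A ⧸ N) := by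
  refine Module.finite_def.2 ?_
  have hmap : L.map N.mkQ = ⊤ := by
    rw [← N.range_mkQ, LinearMap.range_eq_map, ← h, Submodule.map_sup, N.mkQ_map_self, sup_bot_eq]
  exact hmap ▸ hL.map _

variable [IsNoetherianRing R]

theorem finite_torsionBySet_pow (h : Module.Finite R (Submodule.torsionBySet R A (𝔞 : Set R)))
    (n : ℕ) : Module.Finite R (Submodule.torsionBySet R A ((𝔞 ^ n : Ideal R) : Set R)) := by
  refine finExt_zero_iff.1 (FinExt.of_pow_le_annihilator (𝔞 := 𝔞) (k := n) (fun i hi ↦ ?_)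
    Ideal.annihilator_quotient.ge)
  exact Nat.le_zero.1 hi ▸ finExt_zero_iff.2 h

theorem FinExt.of_isArtinian [IsArtinian R A] (h0 : FinExt R (R ⧸ 𝔞) A 0) (n : ℕ) :
    FinExt R (R ⧸ 𝔞) A n := by
  suffices h : ∀ c : Ideal R, ∀ (A : Type u) [AddCommGroup A] [Module R A] [IsArtinian R A],
      c ≤ Module.annihilator R A → FinExt R (R ⧸ 𝔞) A 0 → ∀ n, FinExt R (R ⧸ 𝔞) A n from
    h ⊥ A bot_le h0 n
  clear! A n
  intro c
  induction c using WellFoundedGT.induction with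
  | ind c ih =>
  intro A _ _ _ hc h0
  by_cases hac : 𝔞 ≤ c
  · have := finite_of_finExt_zero (hac.trans hc) h0
    exact FinExt.of_finite
  · obtain ⟨s, L, hs, hL, hdiv⟩ := exists_finset_isPrime_sup_range_lsmul_eq_top (A := A)
      (finite_torsionBySet_pow (finExt_zero_iff.1 h0))
    obtain ⟨x, hxa, hxc, hxs⟩ := exists_mem_notMem_of_isPrime s hs hac
    refine FinExt.of_ker_of_coker_lsmul (x := x) (by rwa [Ideal.annihilator_quotient]) ?_ ?_
    · exact ih _ (Submodule.lt_sup_iff_notMem.2 hxc) _ (sup_span_le_annihilator_ker_lsmul hc x)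
        (FinExt.submodule_zero _ h0)
    · have := finite_quotient_of_sup_eq_top hL (hdiv x hxs)
      exact FinExt.of_finite

end Artinian

section TorsionIdeal

variable {R : Type u} [CommRing R] {𝔞 : Ideal R} {X Y : Type u}
  [AddCommGroup X] [Module R X] [AddCommGroup Y] [Module R Y]

theorem IsTorsionIdeal.of_injective (h : IsTorsionIdeal 𝔞 Y) (f : X →ₗ[R] Y)
    (hf : Function.Injective f) : IsTorsionIdeal 𝔞 X := fun m ↦
  (h (f m)).imp fun _ hn a ha ↦ hf (by rw [map_smul, hn a ha, map_zero])

theorem IsTorsionIdeal.of_surjective (h : IsTorsionIdeal 𝔞 X) (f : X →ₗ[R] Y)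
    (hf : Function.Surjective f) : IsTorsionIdeal 𝔞 Y := fun m ↦ by
  obtain ⟨m, rfl⟩ := hf m
  exact (h m).imp fun _ hn a ha ↦ by rw [← map_smul, hn a ha, map_zero]

theorem exists_mem_forall_smul_eq_zero {S : Submonoid R} [Module.Finite R X]
    (h : ∀ m : X, ∃ s ∈ S, s • m = 0) : ∃ s ∈ S, ∀ m : X, s • m = 0 := by
  obtain ⟨F, hF⟩ := Module.Finite.fg_top (R := R) (M := X)
  choose s hsS hs using h
  have hspan : Submodule.span R (F : Set X) ≤ LinearMap.ker (LinearMap.lsmul R X (F.prod s)) := by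
    refine Submodule.span_le.2 fun m hm ↦ ?_
    obtain ⟨t, ht⟩ := Finset.dvd_prod_of_mem s hm
    rw [SetLike.mem_coe, LinearMap.mem_ker, LinearMap.lsmul_apply, ht, mul_comm, mul_smul, hs,
      smul_zero]
  exact ⟨F.prod s, prod_mem fun m _ ↦ hsS m, fun m ↦ hspan (hF ▸ Submodule.mem_top)⟩

theorem le_annihilator_torsionBySet :
    𝔞 ≤ Module.annihilator R (Submodule.torsionBySet R X (𝔞 : Set R)) := fun r hr ↦
  Module.mem_annihilator.2 fun m ↦
    Subtype.ext ((Submodule.mem_torsionBySet_iff _ _).1 m.2 ⟨r, hr⟩)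

variable [IsNoetherianRing R]

theorem IsTorsionIdeal.isArtinian (h : IsTorsionIdeal 𝔞 X)
    [IsArtinian R (Submodule.torsionBySet R X (𝔞 : Set R))] : IsArtinian R X := by
  obtain ⟨s, hs⟩ := IsNoetherian.noetherian 𝔞
  refine isArtinian_of_torsionBySet_finset s (fun x hx m ↦ ?_) ?_
  · obtain ⟨n, hn⟩ := h m
    exact ⟨n, hn _ (Ideal.pow_mem_pow (hs ▸ Submodule.subset_span hx) n)⟩
  · rw [Submodule.torsionBySet_eq_torsionBySet_span, ← Ideal.submodule_span_eq, hs]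
    infer_instance

theorem IsTorsionIdeal.isArtinian_of_forall_exists_smul_eq_zero (h : IsTorsionIdeal 𝔞 X)
    {c : Ideal R} (hc : c ≤ Module.annihilator R X) {S : Submonoid R}
    (hS : ∀ s ∈ S, IsArtinianRing (R ⧸ (𝔞 ⊔ c ⊔ Ideal.span {s})))
    [Module.Finite R (Submodule.torsionBySet R X (𝔞 : Set R))]
    (hX : ∀ m : X, ∃ s ∈ S, s • m = 0) : IsArtinian R X := by
  obtain ⟨s, hs, hsX⟩ := exists_mem_forall_smul_eq_zero (S := S)
    (X := Submodule.torsionBySet R X (𝔞 : Set R)) fun m ↦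
      (hX m).imp fun s hs ↦ ⟨hs.1, Subtype.ext hs.2⟩
  have hle : 𝔞 ⊔ c ⊔ Ideal.span {s} ≤
      Module.annihilator R (Submodule.torsionBySet R X (𝔞 : Set R)) := by
    refine sup_le (sup_le le_annihilator_torsionBySet (hc.trans
      (LinearMap.annihilator_le_of_injective _ (Submodule.injective_subtype _)))) ?_
    rw [Ideal.span_singleton_le_iff_mem]
    exact Module.mem_annihilator.2 hsX
  have := hS s hs
  have := isArtinian_of_isTorsionBySet (J := 𝔞 ⊔ c ⊔ Ideal.span {s})
    fun m r ↦ Module.mem_annihilator.1 (hle r.2) m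
  exact h.isArtinian

end TorsionIdeal

section Dimension

variable {R : Type*} [CommRing R]

theorem isArtinianRing_quotient_iff [IsNoetherianRing R] {J : Ideal R} :
    IsArtinianRing (R ⧸ J) ↔ ∀ p ∈ J.minimalPrimes, p.IsMaximal := by
  rw [isArtinianRing_iff_isNoetherianRing_krullDimLE_zero,
    and_iff_right (Ideal.Quotient.isNoetherianRing J),
    Ideal.krullDimLE_zero_quotient_iff_forall_minimalPrimes_isMaximal]

theorem mem_minimalPrimes_or_isMaximal {𝔟 : Ideal R} (h : ringKrullDim (R ⧸ 𝔟) ≤ 1)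
    {p : Ideal R} (hp : p.IsPrime) (hle : 𝔟 ≤ p) : p ∈ 𝔟.minimalPrimes ∨ p.IsMaximal := by
  rw [ringKrullDim_quotient, Order.krullDim_le_one_iff] at h
  refine (h ⟨⟨p, hp⟩, hle⟩).imp (fun hmin ↦ ⟨⟨hp, hle⟩, fun q hq hqp ↦ ?_⟩) fun hmax ↦ ?_
  · exact hmin (b := ⟨⟨q, hq.1⟩, hq.2⟩) hqp
  · refine (PrimeSpectrum.isMax_iff (x := ⟨p, hp⟩)).1 fun q hq ↦ ?_
    exact hmax (b := ⟨q, hle.trans hq⟩) hq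

/-- The elements outside every non-maximal minimal prime over `𝔟`. For `dim R ⧸ 𝔟 ≤ 1` they cut
`R ⧸ 𝔟` down to dimension zero both when quotienting by one and when inverting them all. -/
def nonmaximalCompl (𝔟 : Ideal R) : Submonoid R where
  carrier := {s | ∀ p ∈ 𝔟.minimalPrimes, s ∈ p → p.IsMaximal}
  one_mem' p hp h := absurd ((Ideal.eq_top_iff_one p).2 h) hp.1.1.ne_top
  mul_mem' hs ht p hp h := (hp.1.1.mem_or_mem h).elim (hs p hp) (ht p hp)

variable [IsNoetherianRing R]

theorem isArtinianRing_quotient_sup_span {𝔟 : Ideal R} (h : ringKrullDim (R ⧸ 𝔟) ≤ 1) {s : R}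
    (hs : s ∈ nonmaximalCompl 𝔟) : IsArtinianRing (R ⧸ (𝔟 ⊔ Ideal.span {s})) :=
  isArtinianRing_quotient_iff.2 fun p hp ↦
    (mem_minimalPrimes_or_isMaximal h hp.1.1 (le_sup_left.trans hp.1.2)).elim
      (fun hmin ↦ hs p hmin (hp.1.2 (Ideal.mem_sup_right (Ideal.mem_span_singleton_self s)))) id

theorem mem_minimalPrimes_of_disjoint_nonmaximalCompl {𝔟 q : Ideal R} (hq : q.IsPrime)
    (hle : 𝔟 ≤ q) (h : Disjoint (nonmaximalCompl 𝔟 : Set R) q) : q ∈ 𝔟.minimalPrimes := by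
  let T := {p | p ∈ 𝔟.minimalPrimes ∧ ¬ p.IsMaximal}
  have hunion : (q : Set R) ⊆ ⋃ p ∈ T, (id p : Ideal R) := fun x hx ↦ by
    have hxS : ¬ ∀ p ∈ 𝔟.minimalPrimes, x ∈ p → p.IsMaximal :=
      fun hxS ↦ Set.disjoint_left.1 h hxS hx
    push Not at hxS
    obtain ⟨p, hp, hxp, hpm⟩ := hxS
    exact Set.mem_biUnion (show p ∈ T from ⟨hp, hpm⟩) hxp
  have hT : T.Finite :=
    (Ideal.finite_minimalPrimes_of_isNoetherianRing R 𝔟).subset fun _ h ↦ h.1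
  obtain ⟨p, hp, hqp⟩ := (Ideal.subset_union_prime_finite hT ⊥ ⊥
    fun p hp _ _ ↦ hp.1.1.1).1 hunion
  exact ⟨⟨hq, hle⟩, fun r hr hrq ↦ hqp.trans (hp.1.2 hr (hrq.trans hqp))⟩

theorem isArtinianRing_localization_nonmaximalCompl (𝔟 : Ideal R) :
    IsArtinianRing (Localization (nonmaximalCompl 𝔟) ⧸
      𝔟.map (algebraMap R (Localization (nonmaximalCompl 𝔟)))) := by
  have := IsLocalization.isNoetherianRing (nonmaximalCompl 𝔟)
    (Localization (nonmaximalCompl 𝔟)) inferInstance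
  refine isArtinianRing_quotient_iff.2 fun p hp ↦ ?_
  obtain ⟨q, hq, hpq⟩ := Ideal.exists_le_maximal p hp.1.1.ne_top
  have hmin : q ∈ (𝔟.map (algebraMap R (Localization (nonmaximalCompl 𝔟)))).minimalPrimes := by
    rw [IsLocalization.minimalPrimes_map (nonmaximalCompl 𝔟)]
    have hq' := (IsLocalization.isPrime_iff_isPrime_disjoint (nonmaximalCompl 𝔟) _ q).1 hq.isPrime
    exact mem_minimalPrimes_of_disjoint_nonmaximalCompl hq'.1
      (Ideal.map_le_iff_le_comap.1 (hp.1.2.trans hpq)) hq'.2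
  exact le_antisymm hpq (hmin.2 hp.1 hpq) ▸ hq

end Dimension

section Localization

variable {R : Type u} [CommRing R] {S : Submonoid R} {𝔞 : Ideal R} {X : Type u}
  [AddCommGroup X] [Module R X]

theorem mem_torsionBySet_map_iff {A M : Type*} [CommRing A] [Algebra R A] [AddCommGroup M]
    [Module R M] [Module A M] [IsScalarTower R A M] {a : M} :
    a ∈ Submodule.torsionBySet A M (𝔞.map (algebraMap R A) : Set A) ↔ ∀ r ∈ 𝔞, r • a = 0 := by
  rw [Ideal.map, ← Ideal.submodule_span_eq, ← Submodule.torsionBySet_eq_torsionBySet_span,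
    Submodule.mem_torsionBySet_iff]
  simp only [Subtype.forall, Set.forall_mem_image, algebraMap_smul, SetLike.mem_coe]

variable (S) in
theorem IsTorsionIdeal.localizedModule (h : IsTorsionIdeal 𝔞 X) :
    IsTorsionIdeal (𝔞.map (algebraMap R (Localization S))) (LocalizedModule S X) := by
  intro a
  induction a using LocalizedModule.induction_on with
  | h m s =>
  obtain ⟨n, hn⟩ := h m
  have hmem : LocalizedModule.mk m s ∈ Submodule.torsionBySet (Localization S)
      (LocalizedModule S X) ((𝔞 ^ n).map (algebraMap R (Localization S)) : Set _) :=
    mem_torsionBySet_map_iff.2 fun r hr ↦ by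
      rw [LocalizedModule.smul'_mk, hn r hr, LocalizedModule.zero_mk]
  rw [Ideal.map_pow] at hmem
  exact ⟨n, fun r hr ↦ (Submodule.mem_torsionBySet_iff _ _).1 hmem ⟨r, hr⟩⟩

theorem exists_fg_forall_exists_smul_mem {P : Submodule (Localization S) (LocalizedModule S X)}
    (hP : P.FG) : ∃ L : Submodule R X, L.FG ∧
      ∀ m, LocalizedModule.mkLinearMap S X m ∈ P → ∃ s ∈ S, s • m ∈ L := by
  classical
  obtain ⟨F, rfl⟩ := hP
  refine ⟨_, ⟨IsLocalizedModule.finsetIntegerMultiple S (LocalizedModule.mkLinearMap S X) F, rfl⟩,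
    fun m hm ↦ ?_⟩
  obtain ⟨t, ht⟩ := multiple_mem_span_of_mem_localization_span S (Localization S) _ _ hm
  rw [← LinearMap.map_smul_of_tower] at ht
  obtain ⟨u, hu⟩ := IsLocalizedModule.smul_mem_finsetIntegerMultiple_span S
    (LocalizedModule.mkLinearMap S X) _ F ht
  exact ⟨u * t, mul_mem u.2 t.2, by rwa [mul_smul]⟩

variable [IsNoetherianRing R]

theorem torsionBySet_localizedModule :
    Submodule.torsionBySet (Localization S) (LocalizedModule S X)
        (𝔞.map (algebraMap R (Localization S)) : Set _) =
      (Submodule.torsionBySet R X (𝔞 : Set R)).localized' (Localization S) S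
        (LocalizedModule.mkLinearMap S X) := by
  ext a
  rw [mem_torsionBySet_map_iff, Submodule.mem_localized']
  constructor
  · intro h
    obtain ⟨⟨m, s⟩, hms⟩ := IsLocalizedModule.surj S (LocalizedModule.mkLinearMap S X) a
    obtain ⟨t, htS, ht⟩ := exists_mem_forall_smul_eq_zero (S := S)
      (X := Submodule.map (LinearMap.toSpanSingleton R X m) 𝔞) fun ⟨_, r, hr, hrm⟩ ↦ by
        have hr0 : LocalizedModule.mkLinearMap S X (r • m) = 0 := by
          rw [map_smul, ← hms, smul_comm, h r hr, smul_zero]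
        obtain ⟨t, ht⟩ := (IsLocalizedModule.eq_zero_iff S _).1 hr0
        exact ⟨t, t.2, Subtype.ext (hrm ▸ ht)⟩
    refine ⟨t • m, (Submodule.mem_torsionBySet_iff _ _).2 fun r ↦ ?_, ⟨t, htS⟩ * s, ?_⟩
    · rw [smul_comm]
      exact congrArg Subtype.val (ht ⟨_, r, r.2, rfl⟩)
    · rw [IsLocalizedModule.mk'_eq_iff, mul_smul, hms, map_smul]
      rfl
  · rintro ⟨m, hm, s, rfl⟩ r hr
    rw [← IsLocalizedModule.mk'_smul, (Submodule.mem_torsionBySet_iff _ _).1 hm ⟨r, hr⟩,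
      IsLocalizedModule.mk'_zero]

theorem finite_torsionBySet_localizedModule
    [Module.Finite R (Submodule.torsionBySet R X (𝔞 : Set R))] :
    Module.Finite (Localization S) (Submodule.torsionBySet (Localization S) (LocalizedModule S X)
      (𝔞.map (algebraMap R (Localization S)) : Set (Localization S))) := by
  rw [torsionBySet_localizedModule]
  exact Module.Finite.of_isLocalizedModule S (Submodule.toLocalized' (Localization S) S
    (LocalizedModule.mkLinearMap S X) (Submodule.torsionBySet R X (𝔞 : Set R)))

variable {c : Ideal R} [Module.Finite R (Submodule.torsionBySet R X (𝔞 : Set R))]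
  [IsArtinianRing (Localization S ⧸ (𝔞 ⊔ c).map (algebraMap R (Localization S)))]

variable (S) in
theorem IsTorsionIdeal.isArtinian_localizedModule (h : IsTorsionIdeal 𝔞 X)
    (hc : c ≤ Module.annihilator R X) : IsArtinian (Localization S) (LocalizedModule S X) := by
  have := IsLocalization.isNoetherianRing S (Localization S) inferInstance
  have hcX (a : LocalizedModule S X) : ∀ z ∈ c, z • a = 0 := fun z hz ↦ by
    induction a using LocalizedModule.induction_on with
    | h m s => rw [LocalizedModule.smul'_mk, Module.mem_annihilator.1 (hc hz) m,
        LocalizedModule.zero_mk]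
  have := finite_torsionBySet_localizedModule (S := S) (𝔞 := 𝔞) (X := X)
  have := isArtinian_of_isTorsionBySet (J := (𝔞 ⊔ c).map (algebraMap R (Localization S)))
    (A := Submodule.torsionBySet (Localization S) (LocalizedModule S X)
      (𝔞.map (algebraMap R (Localization S)) : Set _)) fun a r ↦ Subtype.ext ?_
  · exact (h.localizedModule S).isArtinian
  · refine (Submodule.mem_torsionBySet_iff _ _).1 (mem_torsionBySet_map_iff.2 fun r hr ↦ ?_) r
    obtain ⟨y, hy, z, hz, rfl⟩ := Submodule.mem_sup.1 hr
    rw [add_smul, mem_torsionBySet_map_iff.1 a.2 y hy, hcX a z hz, add_zero]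

theorem IsTorsionIdeal.exists_fg_forall_exists_smul_mem_range (h : IsTorsionIdeal 𝔞 X)
    (hc : c ≤ Module.annihilator R X) (hac : ¬ 𝔞 ≤ c) :
    ∃ x ∈ 𝔞, x ∉ c ∧ ∃ L : Submodule R X, L.FG ∧
      ∀ m : X ⧸ L, ∃ s ∈ S, s • m ∈ LinearMap.range (LinearMap.lsmul R (X ⧸ L) x) := by
  classical
  have := IsLocalization.isNoetherianRing S (Localization S) inferInstance
  have := h.isArtinian_localizedModule S hc
  obtain ⟨T, P, hT, hP, hdiv⟩ := exists_finset_isPrime_sup_range_lsmul_eq_top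
    (A := LocalizedModule S X) (finite_torsionBySet_pow
      (finite_torsionBySet_localizedModule (S := S) (𝔞 := 𝔞)))
  obtain ⟨x, hxa, hxc, hxT⟩ := exists_mem_notMem_of_isPrime
    (T.image (Ideal.comap (algebraMap R (Localization S)))) (fun q hq ↦ by
      obtain ⟨p, hp, rfl⟩ := Finset.mem_image.1 hq
      have := (hT p hp).1
      exact ⟨inferInstance, Ideal.map_le_iff_le_comap.not.1 (hT p hp).2⟩) hac
  obtain ⟨L, hL, hLP⟩ := exists_fg_forall_exists_smul_mem hP
  refine ⟨x, hxa, hxc, L, hL, fun m ↦ ?_⟩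
  obtain ⟨m, rfl⟩ := L.mkQ_surjective m
  let f := LocalizedModule.mkLinearMap S X
  obtain ⟨l, hl, _, ⟨a, rfl⟩, hla⟩ := Submodule.mem_sup.1 (hdiv (algebraMap R _ x)
    (fun q hq hxq ↦ hxT _ (Finset.mem_image_of_mem _ hq) hxq) ▸ Submodule.mem_top (x := f m))
  obtain ⟨⟨m₀, t⟩, hm₀⟩ := IsLocalizedModule.surj S f a
  have hmem : f ((t : R) • m - x • m₀) ∈ P := by
    have heq : f ((t : R) • m - x • m₀) = algebraMap R (Localization S) t • l := by
      rw [map_sub, map_smul, map_smul, ← hm₀, ← hla, LinearMap.lsmul_apply, algebraMap_smul,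
        algebraMap_smul, smul_add, Submonoid.smul_def, smul_comm x, add_sub_cancel_right]
    exact heq ▸ P.smul_mem _ hl
  obtain ⟨u, hu, huL⟩ := hLP _ hmem
  refine ⟨u * t, mul_mem hu t.2, L.mkQ (u • m₀), ?_⟩
  rw [LinearMap.lsmul_apply, ← map_smul, ← map_smul, eq_comm, ← sub_eq_zero, ← map_sub]
  refine (Submodule.Quotient.mk_eq_zero L).2 ?_
  rwa [mul_smul, smul_comm x, ← smul_sub]

end Localization

section GammaSubmodule

variable {R : Type u} [CommRing R] (𝔞 : Ideal R) (X : Type u) [AddCommGroup X] [Module R X]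

/-- The `𝔞`-torsion submodule `Γ_𝔞(X)`: the elements killed by some power of `𝔞`. -/
def gammaSubmodule : Submodule R X where
  carrier := {m | ∃ n : ℕ, ∀ a ∈ 𝔞 ^ n, a • m = 0}
  zero_mem' := ⟨0, fun _ _ ↦ smul_zero _⟩
  add_mem' := by
    rintro m m' ⟨n, hn⟩ ⟨n', hn'⟩
    refine ⟨n + n', fun a ha ↦ ?_⟩
    rw [smul_add, hn a (Ideal.pow_le_pow_right (Nat.le_add_right _ _) ha),
      hn' a (Ideal.pow_le_pow_right (Nat.le_add_left _ _) ha), add_zero]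
  smul_mem' r _ := Exists.imp fun _ hn a ha ↦ by rw [smul_comm, hn a ha, smul_zero]

theorem isTorsionIdeal_gammaSubmodule : IsTorsionIdeal 𝔞 (gammaSubmodule 𝔞 X) := fun m ↦
  m.2.imp fun _ hn a ha ↦ Subtype.ext (hn a ha)

variable {𝔞 X}

theorem torsionBySet_le_gammaSubmodule {𝔟 : Ideal R} {k : ℕ} (hk : 𝔞 ^ k ≤ 𝔟) :
    Submodule.torsionBySet R X (𝔟 : Set R) ≤ gammaSubmodule 𝔞 X :=
  fun _ hm ↦ ⟨k, fun a ha ↦ (Submodule.mem_torsionBySet_iff _ _).1 hm ⟨a, hk ha⟩⟩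

theorem IsTorsionIdeal.exists_pow_le_annihilator [Module.Finite R X] (h : IsTorsionIdeal 𝔞 X) :
    ∃ n : ℕ, 𝔞 ^ n ≤ Module.annihilator R X := by
  obtain ⟨F, hF⟩ := Module.Finite.fg_top (R := R) (M := X)
  choose n hn using h
  refine ⟨F.sup n, fun a ha ↦ Module.mem_annihilator.2 fun m ↦ ?_⟩
  have hspan : Submodule.span R (F : Set X) ≤ LinearMap.ker (LinearMap.lsmul R X a) :=
    Submodule.span_le.2 fun m hm ↦ hn m a (Ideal.pow_le_pow_right (Finset.le_sup hm) ha)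
  exact hspan (hF ▸ Submodule.mem_top)

theorem gammaSubmodule_not_le_of_mem_minimalPrimes [IsNoetherianRing R] {p : Ideal R}
    (hp : p ∈ minimalPrimes R) (h : 𝔞 ≤ p) : ¬ gammaSubmodule 𝔞 R ≤ p := by
  have := hp.1.1
  have hle : 𝔞 ≤ (RingHom.ker (algebraMap R (Localization.AtPrime p))).radical := by
    rw [RingHom.ker_eq_comap_bot, ← Ideal.comap_radical, ← Ideal.map_le_iff_le_comap,
      ← Ideal.map_bot (f := algebraMap R (Localization.AtPrime p)),
      IsLocalization.AtPrime.radical_map_of_mem_minimalPrimes _ p ⊥ hp]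
    exact Ideal.map_mono h
  obtain ⟨n, hn⟩ := Ideal.exists_pow_le_of_le_radical_of_fg hle (IsNoetherian.noetherian 𝔞)
  obtain ⟨s, hsp, hs⟩ := exists_mem_forall_smul_eq_zero (S := p.primeCompl)
    (X := (𝔞 ^ n : Ideal R)) fun a ↦ by
      obtain ⟨s, hs⟩ := (IsLocalization.map_eq_zero_iff p.primeCompl
        (Localization.AtPrime p) (a : R)).1 (hn a.2)
      exact ⟨s, s.2, Subtype.ext hs⟩
  exact fun hle ↦ hsp (hle ⟨n, fun a ha ↦ by
    rw [smul_eq_mul, mul_comm]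
    exact congrArg Subtype.val (hs ⟨a, ha⟩)⟩)

end GammaSubmodule

section Cofiniteness

variable {R : Type u} [CommRing R] {N A B : Type u} [AddCommGroup N] [Module R N]
  [AddCommGroup A] [Module R A] [AddCommGroup B] [Module R B]

theorem ringKrullDim_quotient_le_of_le {I J : Ideal R} (h : I ≤ J) :
    ringKrullDim (R ⧸ J) ≤ ringKrullDim (R ⧸ I) :=
  ringKrullDim_le_of_surjective (Ideal.Quotient.factor h) (Ideal.Quotient.factor_surjective h)

theorem ringKrullDim_quotient_le_of_forall_minimalPrimes {I : Ideal R} {n : ℕ}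
    (h : ringKrullDim R ≤ (n + 1 : ℕ)) (hI : ∀ p ∈ minimalPrimes R, ¬ I ≤ p) :
    ringKrullDim (R ⧸ I) ≤ n := by
  rw [ringKrullDim_quotient]
  refine iSup_le fun l ↦ ?_
  obtain ⟨p, hp, hle⟩ := Ideal.exists_minimalPrimes_le (J := l.head.1.asIdeal) bot_le
  have hlt : (⟨p, hp.1.1⟩ : PrimeSpectrum R) < l.head :=
    lt_of_le_of_ne hle fun heq ↦ hI p hp
      (l.head.2.trans_eq (congrArg PrimeSpectrum.asIdeal heq).symm)
  have hlen : ((0 + l.length + 1 : ℕ) : WithBot ℕ∞) ≤ (n + 1 : ℕ) :=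
    (Order.LTSeries.length_le_krullDim
      ((l.map Subtype.val fun _ _ ↦ id).cons _ hlt)).trans h
  rw [zero_add] at hlen
  exact_mod_cast Nat.le_of_succ_le_succ (by exact_mod_cast hlen)

variable [IsNoetherianRing R]

theorem FinExt.ker_one (f : A →ₗ[R] B) (h0 : FinExt R N B 0) (h1 : FinExt R N A 1) :
    FinExt R N (LinearMap.ker f) 1 :=
  finite_ext_X₁ (shortExact_ker_range f)
    (fun _ hm ↦ by rw [Nat.succ.inj hm]; exact FinExt.submodule_zero _ h0) h1

theorem FinExt.coker_zero (f : A →ₗ[R] B) (h0 : FinExt R N B 0) (h1 : FinExt R N A 1)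
    (h2 : FinExt R N (LinearMap.ker f) 2) : FinExt R N (B ⧸ LinearMap.range f) 0 :=
  finite_ext_X₃ (shortExact_submodule (LinearMap.range f)) h0
    (finite_ext_X₃ (shortExact_ker_range f) h1 h2)

variable {𝔞 : Ideal R}

theorem FinExt.of_ringKrullDim_quotient_sup_le_one {c : Ideal R} (hA : IsTorsionIdeal 𝔞 A)
    (hc : c ≤ Module.annihilator R A) (hdim : ringKrullDim (R ⧸ (𝔞 ⊔ c)) ≤ 1)
    (h0 : FinExt R (R ⧸ 𝔞) A 0) (h1 : FinExt R (R ⧸ 𝔞) A 1) (n : ℕ) : FinExt R (R ⧸ 𝔞) A n := by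
  induction c using WellFoundedGT.induction generalizing A n with
  | ind c ih =>
  by_cases hac : 𝔞 ≤ c
  · have := finite_of_finExt_zero (hac.trans hc) h0
    exact FinExt.of_finite n
  have := isArtinianRing_localization_nonmaximalCompl (𝔞 ⊔ c)
  have := finExt_zero_iff.1 h0
  obtain ⟨x, hxa, hxc, L, hL, hdiv⟩ :=
    hA.exists_fg_forall_exists_smul_mem_range (S := nonmaximalCompl (𝔞 ⊔ c)) hc hac
  let f := LinearMap.lsmul R (A ⧸ L) x
  have h0L : FinExt R (R ⧸ 𝔞) (A ⧸ L) 0 := FinExt.quotient_of_fg hL h0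
  have h1L : FinExt R (R ⧸ 𝔞) (A ⧸ L) 1 := FinExt.quotient_of_fg hL h1
  have hAL : IsTorsionIdeal 𝔞 (A ⧸ L) := hA.of_surjective _ L.mkQ_surjective
  have hcL : c ≤ Module.annihilator R (A ⧸ L) :=
    hc.trans (LinearMap.annihilator_le_of_surjective _ L.mkQ_surjective)
  have hker (n) : FinExt R (R ⧸ 𝔞) (LinearMap.ker f) n :=
    ih _ (Submodule.lt_sup_iff_notMem.2 hxc) (hAL.of_injective _ (Submodule.injective_subtype _))
      (sup_span_le_annihilator_ker_lsmul hcL x)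
      ((ringKrullDim_quotient_le_of_le (sup_le_sup_left le_sup_left _)).trans hdim)
      (FinExt.submodule_zero _ h0L) (FinExt.ker_one f h0L h1L) n
  have h0Q : FinExt R (R ⧸ 𝔞) ((A ⧸ L) ⧸ LinearMap.range f) 0 :=
    FinExt.coker_zero f h0L h1L (hker 2)
  have hart : IsArtinian R ((A ⧸ L) ⧸ LinearMap.range f) := by
    have := finExt_zero_iff.1 h0Q
    refine (hAL.of_surjective _ (Submodule.mkQ_surjective _))
      |>.isArtinian_of_forall_exists_smul_eq_zero (hcL.trans
        (LinearMap.annihilator_le_of_surjective _ (Submodule.mkQ_surjective (LinearMap.range f))))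
      (fun s ↦ isArtinianRing_quotient_sup_span hdim) fun m ↦ ?_
    obtain ⟨m, rfl⟩ := Submodule.mkQ_surjective _ m
    exact (hdiv m).imp fun s hs ↦ ⟨hs.1, (Submodule.Quotient.mk_eq_zero _).2 hs.2⟩
  exact FinExt.of_quotient_of_fg hL (FinExt.of_ker_of_coker_lsmul
    (by rwa [Ideal.annihilator_quotient]) hker (FinExt.of_isArtinian h0Q) n)

theorem FinExt.of_ringKrullDim_quotient_le_one (h : ringKrullDim (R ⧸ 𝔞) ≤ 1)
    (hA : IsTorsionIdeal 𝔞 A) (h0 : FinExt R (R ⧸ 𝔞) A 0) (h1 : FinExt R (R ⧸ 𝔞) A 1) (n : ℕ) :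
    FinExt R (R ⧸ 𝔞) A n :=
  FinExt.of_ringKrullDim_quotient_sup_le_one hA bot_le (by rwa [sup_bot_eq]) h0 h1 n

theorem FinExt.of_ringKrullDim_le_two (h : ringKrullDim R ≤ 2) (hA : IsTorsionIdeal 𝔞 A)
    (h0 : FinExt R (R ⧸ 𝔞) A 0) (h1 : FinExt R (R ⧸ 𝔞) A 1) (n : ℕ) : FinExt R (R ⧸ 𝔞) A n := by
  obtain ⟨k, hk⟩ := (isTorsionIdeal_gammaSubmodule 𝔞 R).exists_pow_le_annihilator
  let L : Submodule R A := (gammaSubmodule 𝔞 R : Ideal R) • ⊤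
  have hL : L ≤ Submodule.torsionBySet R A ((𝔞 ^ k : Ideal R) : Set R) := by
    refine Submodule.smul_le.2 fun r hr m _ ↦ (Submodule.mem_torsionBySet_iff _ _).2 fun a ↦ ?_
    have har : (a : R) • r = 0 :=
      congrArg Subtype.val (Module.mem_annihilator.1 (hk a.2) ⟨r, hr⟩)
    rw [← smul_assoc, har, zero_smul]
  have := finite_torsionBySet_pow (finExt_zero_iff.1 h0) k
  have := isNoetherian_of_le hL
  have hfg : L.FG := Module.Finite.iff_fg.1 inferInstance
  have hann : gammaSubmodule 𝔞 R ≤ Module.annihilator R (A ⧸ L) := fun r hr ↦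
    Module.mem_annihilator.2 fun m ↦ by
      obtain ⟨m, rfl⟩ := L.mkQ_surjective m
      exact (Submodule.Quotient.mk_eq_zero L).2 (Submodule.smul_mem_smul hr Submodule.mem_top)
  exact FinExt.of_quotient_of_fg hfg (FinExt.of_ringKrullDim_quotient_sup_le_one
    (hA.of_surjective _ L.mkQ_surjective) hann
    (ringKrullDim_quotient_le_of_forall_minimalPrimes h fun p hp hle ↦
      gammaSubmodule_not_le_of_mem_minimalPrimes hp (le_sup_left.trans hle)
        (le_sup_right.trans hle))
    (FinExt.quotient_of_fg hfg h0) (FinExt.quotient_of_fg hfg h1) n)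

theorem FinExt.of_span_singleton {x : R} (h0 : FinExt R (R ⧸ Ideal.span {x}) A 0)
    (h1 : FinExt R (R ⧸ Ideal.span {x}) A 1) (n : ℕ) : FinExt R (R ⧸ Ideal.span {x}) A n := by
  have hx : x ∈ Module.annihilator R (R ⧸ Ideal.span {x}) :=
    Ideal.annihilator_quotient.ge (Ideal.mem_span_singleton_self x)
  have : Module.Finite R (LinearMap.ker (LinearMap.lsmul R A x)) :=
    finite_of_finExt_zero (le_sup_right.trans (sup_span_le_annihilator_ker_lsmul bot_le x))
      (FinExt.submodule_zero _ h0)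
  have : Module.Finite R (A ⧸ LinearMap.range (LinearMap.lsmul R A x)) := by
    refine finite_of_finExt_zero ((Ideal.span_singleton_le_iff_mem _).2
      (Module.mem_annihilator.2 fun m ↦ ?_)) (FinExt.coker_zero _ h0 h1 (FinExt.of_finite 2))
    obtain ⟨m, rfl⟩ := Submodule.mkQ_surjective _ m
    exact (Submodule.Quotient.mk_eq_zero _).2 ⟨m, rfl⟩
  exact FinExt.of_ker_of_coker_lsmul hx FinExt.of_finite FinExt.of_finite n

theorem exists_radical_span_singleton_eq (h : arithRank 𝔞 ≤ 1) :
    ∃ x : R, (Ideal.span {x}).radical = 𝔞.radical := by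
  obtain ⟨n, g, hg⟩ := Submodule.fg_iff_exists_fin_generating_family.1 (IsNoetherian.noetherian 𝔞)
  obtain ⟨f, hf⟩ : ∃ f : Fin (arithRank 𝔞) → R,
      (Ideal.span (Set.range f)).radical = 𝔞.radical :=
    Nat.sInf_mem (s := {n | ∃ f : Fin n → R, _}) ⟨n, g, congrArg Ideal.radical hg⟩
  generalize arithRank 𝔞 = r at h f hf
  interval_cases r
  · exact ⟨0, by rw [← hf, Set.range_eq_empty, Ideal.span_empty, Ideal.span_singleton_zero]⟩
  · exact ⟨f 0, by rw [← hf, Set.range_unique, Fin.default_eq_zero]⟩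

theorem FinExt.of_arithRank_le_one (h : arithRank 𝔞 ≤ 1) (h0 : FinExt R (R ⧸ 𝔞) A 0)
    (h1 : FinExt R (R ⧸ 𝔞) A 1) (n : ℕ) : FinExt R (R ⧸ 𝔞) A n := by
  obtain ⟨x, hx⟩ := exists_radical_span_singleton_eq h
  have hle (i) (hi : i ≤ 1) : FinExt R (R ⧸ Ideal.span {x}) A i :=
    FinExt.of_le_radical (𝔞 := 𝔞) (fun j hj ↦ by
      have := hj.trans hi
      interval_cases j
      exacts [h0, h1]) (hx ▸ Ideal.le_radical)
  exact FinExt.of_le_radical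
    (fun i _ ↦ FinExt.of_span_singleton (hle 0 zero_le_one) (hle 1 le_rfl) i)
    (hx ▸ Ideal.le_radical)

/-- An `𝔞`-torsion module `M` has every `Extⁿ(R/𝔞, M)` finitely generated as soon as this holds for
`n = 0, 1`. -/
def HasTwoTermCofiniteness (𝔞 : Ideal R) : Prop :=
  ∀ (M : Type u) [AddCommGroup M] [Module R M], IsTorsionIdeal 𝔞 M →
    FinExt R (R ⧸ 𝔞) M 0 → FinExt R (R ⧸ 𝔞) M 1 → ∀ n, FinExt R (R ⧸ 𝔞) M n

theorem hasTwoTermCofiniteness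
    (h : ringKrullDim (R ⧸ 𝔞) ≤ 1 ∨ ringKrullDim R ≤ 2 ∨ arithRank 𝔞 ≤ 1) :
    HasTwoTermCofiniteness 𝔞 := fun _ _ _ hM h0 h1 ↦ by
  obtain h | h | h := h
  · exact FinExt.of_ringKrullDim_quotient_le_one h hM h0 h1
  · exact FinExt.of_ringKrullDim_le_two h hM h0 h1
  · exact FinExt.of_arithRank_le_one h h0 h1

end Cofiniteness

section GammaInjective

variable {R : Type u} [CommRing R] {𝔞 : Ideal R} {X Y : Type u} [AddCommGroup X] [Module R X]
  [AddCommGroup Y] [Module R Y]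

theorem comap_gammaSubmodule_of_injective {f : X →ₗ[R] Y} (hf : Function.Injective f) :
    (gammaSubmodule 𝔞 Y).comap f = gammaSubmodule 𝔞 X := by
  ext m
  refine exists_congr fun n ↦ forall₂_congr fun a _ ↦ ?_
  rw [← map_smul, map_eq_zero_iff f hf]

theorem subsingleton_ext_zero_of_gammaSubmodule_eq_bot {𝔟 : Ideal R} {k : ℕ} (hk : 𝔞 ^ k ≤ 𝔟)
    (h : gammaSubmodule 𝔞 X = ⊥) :
    Subsingleton (Abelian.Ext (ModuleCat.of R (R ⧸ 𝔟)) (ModuleCat.of R X) 0) := by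
  rw [(extZeroEquivTorsionBySet X 𝔟).toEquiv.subsingleton_congr,
    Submodule.subsingleton_iff_eq_bot, eq_bot_iff, ← h]
  exact torsionBySet_le_gammaSubmodule hk

variable [IsNoetherianRing R]

theorem gammaSubmodule_quotient_eq_bot : gammaSubmodule 𝔞 (X ⧸ gammaSubmodule 𝔞 X) = ⊥ := by
  rw [eq_bot_iff]
  rintro m ⟨n, hn⟩
  obtain ⟨m, rfl⟩ := Submodule.mkQ_surjective _ m
  let N : Submodule R X := Submodule.map (LinearMap.toSpanSingleton R X m) (𝔞 ^ n)
  have hN : N ≤ gammaSubmodule 𝔞 X := by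
    rintro _ ⟨a, ha, rfl⟩
    exact (Submodule.Quotient.mk_eq_zero _).1 (hn a ha)
  obtain ⟨k, hk⟩ := ((isTorsionIdeal_gammaSubmodule 𝔞 X).of_injective (Submodule.inclusion hN)
    (Submodule.inclusion_injective hN)).exists_pow_le_annihilator
  have hle : 𝔞 ^ (k + n) ≤ LinearMap.ker (LinearMap.toSpanSingleton R X m) := by
    rw [pow_add, Ideal.mul_le]
    intro a ha b hb
    exact (mul_smul a b m).trans
      (congrArg Subtype.val (Module.mem_annihilator.1 (hk ha) ⟨_, b, hb, rfl⟩))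
  exact (Submodule.mem_bot R).2 ((Submodule.Quotient.mk_eq_zero _).2 ⟨k + n, hle⟩)

theorem IsTorsionIdeal.exists_comap_pow_smul_top_le_ker (hY : IsTorsionIdeal 𝔞 Y)
    [Module.Finite R X] {L : Submodule R X} (f : L →ₗ[R] Y) :
    ∃ n, (𝔞 ^ n • ⊤ : Submodule R X).comap L.subtype ≤ LinearMap.ker f := by
  obtain ⟨n, hn⟩ := (hY.of_injective (LinearMap.range f).subtype
    (Submodule.injective_subtype _)).exists_pow_le_annihilator
  obtain ⟨k, hk⟩ := Ideal.exists_pow_inf_eq_pow_smul 𝔞 L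
  refine ⟨n + k, fun m hm ↦ ?_⟩
  have hker : 𝔞 ^ n • L ≤ (LinearMap.ker f).map L.subtype := by
    refine Submodule.smul_le.2 fun a ha y hy ↦ ⟨a • ⟨y, hy⟩, ?_, rfl⟩
    exact (map_smul f a _).trans
      (congrArg Subtype.val (Module.mem_annihilator.1 (hn ha) ⟨_, ⟨y, hy⟩, rfl⟩))
  have hmem : (m : X) ∈ 𝔞 ^ n • L := by
    have hinf : (m : X) ∈ 𝔞 ^ (n + k) • ⊤ ⊓ L := ⟨hm, m.2⟩
    rw [hk _ (Nat.le_add_left k n), Nat.add_sub_cancel] at hinf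
    exact SetLike.le_def.1 (smul_mono_right _ inf_le_right) hinf
  obtain ⟨y, hy, hym⟩ := hker hmem
  rwa [← Subtype.ext hym]

theorem baer_gammaSubmodule (hX : Module.Injective R X) : Module.Baer R (gammaSubmodule 𝔞 X) := by
  intro J f
  obtain ⟨n, hn⟩ := (isTorsionIdeal_gammaSubmodule 𝔞 X).exists_comap_pow_smul_top_le_ker f
  let K : Submodule R J := (𝔞 ^ n • ⊤ : Submodule R R).comap J.subtype
  let j : (J ⧸ K) →ₗ[R] R ⧸ (𝔞 ^ n • ⊤ : Submodule R R) := Submodule.mapQ _ _ J.subtype le_rfl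
  have hj : Function.Injective j := by
    rw [← LinearMap.ker_eq_bot, Submodule.ker_mapQ, Submodule.mkQ_map_self]
  obtain ⟨g, hg⟩ := hX.out j hj ((gammaSubmodule 𝔞 X).subtype.comp (K.liftQ f hn))
  refine ⟨(g.comp (Submodule.mkQ _)).codRestrict _ fun r ↦ ⟨n, fun a ha ↦ ?_⟩,
    fun r hr ↦ Subtype.ext (hg (K.mkQ ⟨r, hr⟩))⟩
  rw [← map_smul, LinearMap.comp_apply, (LinearMap.mem_ker (f := Submodule.mkQ _)).1, map_zero]
  rw [Submodule.ker_mkQ]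
  exact Submodule.smul_mem_smul ha Submodule.mem_top

instance injective_gammaSubmodule [Injective (ModuleCat.of R X)] :
    Injective (ModuleCat.of R (gammaSubmodule 𝔞 X)) :=
  have := (baer_gammaSubmodule (𝔞 := 𝔞)
    (Module.injective_module_of_injective_object R X)).injective
  Module.injective_object_of_injective_module R _

theorem subsingleton_ext_quotient_gammaSubmodule [Injective (ModuleCat.of R X)] {𝔟 : Ideal R}
    {k : ℕ} (hk : 𝔞 ^ k ≤ 𝔟) (n : ℕ) : Subsingleton (Abelian.Ext (ModuleCat.of R (R ⧸ 𝔟))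
      (ModuleCat.of R (X ⧸ gammaSubmodule 𝔞 X)) n) := by
  cases n with
  | zero => exact subsingleton_ext_zero_of_gammaSubmodule_eq_bot hk gammaSubmodule_quotient_eq_bot
  | succ n =>
    refine subsingleton_of_forall_eq 0 fun z ↦ ?_
    obtain ⟨w, hw⟩ := Abelian.Ext.covariant_sequence_exact₃ _
      (shortExact_submodule (gammaSubmodule 𝔞 X)) z rfl (Abelian.Ext.eq_zero_of_injective _)
    rw [← hw, Abelian.Ext.eq_zero_of_injective w]
    exact Abelian.Ext.zero_comp ..

end GammaInjective

section DerivedExt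

open Opposite

variable {R : Type*} [CommRing R] {C : Type*} [Category* C] [Abelian C] [Linear R C]

variable (R) in
/-- The map `Hom(Q, Y) ⟶ Hom(P, Y)` of Hom-complexes induced by a map of complexes `P ⟶ Q`. -/
noncomputable def linearYonedaMap {P Q : ChainComplex C ℕ} (φ : P ⟶ Q) (Y : C) :
    Q.linearYonedaObj R Y ⟶ P.linearYonedaObj R Y :=
  (HomologicalComplex.unopFunctor _ _).map
    ((((linearYoneda R C).obj Y).rightOp.mapHomologicalComplex _).map φ).op

theorem isoExt_inv_comp_map [EnoughProjectives C] {X X' : C} {f : X' ⟶ X}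
    {P : ProjectiveResolution X} {P' : ProjectiveResolution X'}
    (φ : ProjectiveResolution.Hom P' P f) (n : ℕ) (Y : C) :
    (P.isoExt (R := R) n Y).inv ≫ ((Ext R C n).map f.op).app Y =
      HomologicalComplex.homologyMap (linearYonedaMap R φ.hom Y) n ≫ (P'.isoExt n Y).inv := by
  have hleft := congrArg Quiver.Hom.unop (ProjectiveResolution.isoLeftDerivedObj_hom_naturality
    f P' P φ.hom (by simpa using φ.hom_f_zero_comp_π_f_zero)
    ((linearYoneda R C).obj Y).rightOp n)
  have hop := congrArg Quiver.Hom.unop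
    (HomologicalComplex.homologyOp_hom_naturality (linearYonedaMap R φ.hom Y) n)
  refine (Category.assoc _ _ _).trans ((congrArg (_ ≫ ·) hleft).trans ?_)
  refine (Category.assoc _ _ _).symm.trans ((congrArg (· ≫ (P'.isoLeftDerivedObj
    ((linearYoneda R C).obj Y).rightOp n).hom.unop) hop).trans ?_)
  exact Category.assoc _ _ _

section HomComplex

variable {X : C} (P : ProjectiveResolution X) (Y : C) (n : ℕ)

variable (R) in
/-- An `n`-cocycle of the Hom-complex of `P`, as a morphism `P.complex.X n ⟶ Y`. -/
noncomputable def cyclesHom :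
    (P.complex.linearYonedaObj R Y).cycles n →ₗ[R] (P.complex.X n ⟶ Y) :=
  ((P.complex.linearYonedaObj R Y).iCycles n).hom

theorem injective_cyclesHom : Function.Injective (cyclesHom R P Y n) :=
  (ModuleCat.mono_iff_injective ((P.complex.linearYonedaObj R Y).iCycles n)).1 inferInstance

variable {P Y n}

theorem d_comp_cyclesHom (z) : P.complex.d (n + 1) n ≫ cyclesHom R P Y n z = 0 :=
  ConcreteCategory.congr_hom ((P.complex.linearYonedaObj R Y).iCycles_d n (n + 1)) z

theorem exists_cyclesHom_eq (f : P.complex.X n ⟶ Y) (hf : P.complex.d (n + 1) n ≫ f = 0) :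
    ∃ z, cyclesHom R P Y n z = f :=
  (ShortComplex.moduleCat_exact_iff _).1 (ShortComplex.exact_of_f_is_kernel
    (ShortComplex.mk _ _ ((P.complex.linearYonedaObj R Y).iCycles_d n (n + 1)))
    ((P.complex.linearYonedaObj R Y).cyclesIsKernel n (n + 1) (by simp))) f hf

theorem surjective_homologyπ :
    Function.Surjective ((P.complex.linearYonedaObj R Y).homologyπ n).hom :=
  (ModuleCat.epi_iff_surjective _).1 inferInstance

theorem homologyπ_eq_zero_iff {m : ℕ} (hm : (ComplexShape.up ℕ).prev n = m) (z) :
    ((P.complex.linearYonedaObj R Y).homologyπ n).hom z = 0 ↔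
      ∃ g : P.complex.X m ⟶ Y, P.complex.d n m ≫ g = cyclesHom R P Y n z := by
  let K := P.complex.linearYonedaObj R Y
  have hexact := (ShortComplex.moduleCat_exact_iff _).1 (ShortComplex.exact_of_g_is_cokernel
    (ShortComplex.mk _ _ (K.toCycles_comp_homologyπ m n)) (K.homologyIsCokernel m n hm))
  have hcycles (g) : cyclesHom R P Y n ((K.toCycles m n).hom g) = P.complex.d n m ≫ g :=
    ConcreteCategory.congr_hom (K.toCycles_i m n) g
  refine ⟨fun h ↦ (hexact z h).imp fun g hg ↦
    (hcycles g).symm.trans (congrArg (cyclesHom R P Y n) hg), fun ⟨g, hg⟩ ↦ ?_⟩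
  obtain rfl := injective_cyclesHom P Y n ((hcycles g).trans hg)
  exact ConcreteCategory.congr_hom (K.toCycles_comp_homologyπ m n) g

end HomComplex

variable [HasExt.{u} C]

section CyclesToExt

variable {X : C} (P : ProjectiveResolution X) (Y : C) (n : ℕ)

variable (R) in
/-- The class in `Extⁿ(X, Y)` of an `n`-cocycle of the Hom-complex of `P`. -/
noncomputable def cyclesToExt :
    (P.complex.linearYonedaObj R Y).cycles n →ₗ[R] Abelian.Ext X Y n where
  toFun z := P.extMk (cyclesHom R P Y n z) (n + 1) rfl (d_comp_cyclesHom z)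
  map_add' a b := by
    rw [P.add_extMk]
    congr 1
    exact map_add _ _ _
  map_smul' r a := by
    rw [RingHom.id_apply, Abelian.Ext.smul_eq_comp_mk₀, P.extMk_comp_mk₀]
    congr 1
    rw [map_smul, Linear.comp_smul, Category.comp_id]

theorem surjective_cyclesToExt : Function.Surjective (cyclesToExt R P Y n) := by
  intro α
  obtain ⟨f, hf, rfl⟩ := P.extMk_surjective α (n + 1) rfl
  obtain ⟨z, rfl⟩ := exists_cyclesHom_eq (R := R) f hf
  exact ⟨z, rfl⟩

variable {P Y n}

theorem extMk_zero_eq_zero_iff (f : P.complex.X 0 ⟶ Y) {m : ℕ} (hm : 0 + 1 = m)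
    (hf : P.complex.d m 0 ≫ f = 0) : P.extMk f m hm hf = 0 ↔ f = 0 := by
  refine ⟨fun h ↦ ?_, by rintro rfl; exact P.extMk_zero m hm⟩
  rw [← P.extEquivCohomologyClass.apply_eq_iff_eq, P.extEquivCohomologyClass_extMk,
    P.extEquivCohomologyClass_zero, CochainComplex.HomComplex.CohomologyClass.mk_eq_zero_iff,
    CochainComplex.HomComplex.Cocycle.toSingleMk_mem_coboundaries_iff _ _ _ _ _ 1 (by lia)] at h
  obtain ⟨g, hg⟩ := h
  have hd : P.cochainComplex.d (-((0 : ℕ) : ℤ)) 1 = 0 :=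
    (P.cochainComplex.isZero_of_isStrictlyLE 0 1 (by lia)).eq_of_tgt _ _
  rw [hd, Limits.zero_comp] at hg
  rw [← cancel_epi (P.cochainComplexXIso (-(0 : ℕ)) 0 rfl).hom, ← hg, Limits.comp_zero]

theorem cyclesToExt_eq_zero_iff (z) : cyclesToExt R P Y n z = 0 ↔
    ((P.complex.linearYonedaObj R Y).homologyπ n).hom z = 0 := by
  rcases n with _ | n
  · rw [homologyπ_eq_zero_iff (m := 0) (by simp), P.complex.shape _ _ (by simp)]
    refine (extMk_zero_eq_zero_iff _ rfl (d_comp_cyclesHom z)).trans ⟨fun h ↦ ⟨0, ?_⟩, ?_⟩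
    · rw [h, Limits.comp_zero]
    · rintro ⟨g, hg⟩
      rw [← hg, Limits.zero_comp]
  · rw [homologyπ_eq_zero_iff (m := n) (by simp)]
    exact P.extMk_eq_zero_iff _ (n + 2) rfl (d_comp_cyclesHom z) n rfl

theorem cyclesToExt_cyclesMap {X' : C} {f : X' ⟶ X} {P' : ProjectiveResolution X'}
    (φ : ProjectiveResolution.Hom P' P f) (z) : cyclesToExt R P' Y n
      ((HomologicalComplex.cyclesMap (linearYonedaMap R φ.hom Y) n).hom z) =
        (Abelian.Ext.mk₀ f).comp (cyclesToExt R P Y n z) (zero_add n) := by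
  refine Eq.trans ?_ (ProjectiveResolution.mk₀_comp_extMk (n := n) _ (n + 1) rfl
    (d_comp_cyclesHom z) φ).symm
  have hcycles := ConcreteCategory.congr_hom
    (HomologicalComplex.cyclesMap_i (linearYonedaMap R φ.hom Y) n) z
  dsimp only [cyclesToExt, LinearMap.coe_mk, AddHom.coe_mk]
  congr 1

theorem ker_homologyπ : LinearMap.ker ((P.complex.linearYonedaObj R Y).homologyπ n).hom =
    LinearMap.ker (cyclesToExt R P Y n) :=
  Submodule.ext fun z ↦ (cyclesToExt_eq_zero_iff z).symm

variable (R P Y n) in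
/-- The cohomology of the Hom-complex of a projective resolution computes `Abelian.Ext`. -/
noncomputable def homologyEquivExt :
    (P.complex.linearYonedaObj R Y).homology n ≃ₗ[R] Abelian.Ext X Y n :=
  (LinearMap.quotKerEquivOfSurjective _ surjective_homologyπ).symm ≪≫ₗ
    Submodule.quotEquivOfEq _ _ ker_homologyπ ≪≫ₗ
    LinearMap.quotKerEquivOfSurjective _ (surjective_cyclesToExt P Y n)

theorem homologyEquivExt_homologyπ (z) :
    homologyEquivExt R P Y n (((P.complex.linearYonedaObj R Y).homologyπ n).hom z) =
      cyclesToExt R P Y n z :=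
  congrArg (Submodule.quotEquivOfEq _ _ ker_homologyπ ≪≫ₗ LinearMap.quotKerEquivOfSurjective _ _)
    ((LinearEquiv.symm_apply_eq (LinearMap.quotKerEquivOfSurjective _ surjective_homologyπ)
      (y := Submodule.Quotient.mk z)).2 rfl)

theorem homologyEquivExt_homologyMap {X' : C} {f : X' ⟶ X} {P' : ProjectiveResolution X'}
    (φ : ProjectiveResolution.Hom P' P f) (z) : homologyEquivExt R P' Y n
      ((HomologicalComplex.homologyMap (linearYonedaMap R φ.hom Y) n).hom z) =
        (Abelian.Ext.mk₀ f).comp (homologyEquivExt R P Y n z) (zero_add n) := by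
  obtain ⟨z, rfl⟩ := surjective_homologyπ z
  rw [homologyEquivExt_homologyπ, ← cyclesToExt_cyclesMap φ, ← homologyEquivExt_homologyπ]
  exact congrArg (homologyEquivExt R P' Y n) (ConcreteCategory.congr_hom
    (HomologicalComplex.homologyπ_naturality (linearYonedaMap R φ.hom Y) n) z)

end CyclesToExt

variable [EnoughProjectives C]

variable (R) in
/-- The comparison between the derived functor `Ext` and `Abelian.Ext`. -/
noncomputable def derivedExtEquiv (X Y : C) (n : ℕ) :
    ((Ext R C n).obj (op X)).obj Y ≃ₗ[R] Abelian.Ext X Y n :=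
  ((projectiveResolution X).isoExt n Y).toLinearEquiv ≪≫ₗ
    homologyEquivExt R (projectiveResolution X) Y n

theorem derivedExtEquiv_map {X X' : C} (f : X' ⟶ X) (Y : C) (n : ℕ) (z) :
    derivedExtEquiv R X' Y n ((((Ext R C n).map f.op).app Y).hom z) =
      (Abelian.Ext.mk₀ f).comp (derivedExtEquiv R X Y n z) (zero_add n) := by
  let P := projectiveResolution X
  let P' := projectiveResolution X'
  let φ : ProjectiveResolution.Hom P' P f :=
    { hom := ProjectiveResolution.lift f P' P
      hom_f_zero_comp_π_f_zero := by simpa using ProjectiveResolution.lift_commutes_zero f P' P }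
  obtain ⟨z, rfl⟩ := (P.isoExt (R := R) n Y).toLinearEquiv.symm.surjective z
  have hz : derivedExtEquiv R X Y n ((P.isoExt n Y).toLinearEquiv.symm z) =
      homologyEquivExt R P Y n z :=
    congrArg (homologyEquivExt R P Y n) ((P.isoExt n Y).toLinearEquiv.apply_symm_apply z)
  rw [hz, ← homologyEquivExt_homologyMap φ]
  refine (congrArg (derivedExtEquiv R X' Y n)
    (ConcreteCategory.congr_hom (isoExt_inv_comp_map φ n Y) z)).trans ?_
  exact congrArg (homologyEquivExt R P' Y n)
    ((P'.isoExt n Y).toLinearEquiv.apply_symm_apply _)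

end DerivedExt

section DirectSystem

variable {R : Type u} [CommRing R] (𝔞 : Ideal R)

/-- The projection `R ⧸ 𝔞 ^ s ⟶ R ⧸ 𝔞 ^ t` for `t ≤ s`. -/
def quotientPowMap {t s : ℕ} (h : t ≤ s) :
    ModuleCat.of R (R ⧸ 𝔞 ^ s) ⟶ ModuleCat.of R (R ⧸ 𝔞 ^ t) :=
  ModuleCat.ofHom (Submodule.factor (Ideal.pow_le_pow_right h))

/-- The transition map `Extⁱ(R ⧸ 𝔞 ^ t, M) → Extⁱ(R ⧸ 𝔞 ^ s, M)` for `t ≤ s`. -/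
noncomputable def extPowMap {t s : ℕ} (h : t ≤ s) (M : ModuleCat.{u} R) (i : ℕ) :
    Abelian.Ext (ModuleCat.of R (R ⧸ 𝔞 ^ t)) M i →ₗ[R]
      Abelian.Ext (ModuleCat.of R (R ⧸ 𝔞 ^ s)) M i :=
  (Abelian.Ext.mk₀ (quotientPowMap 𝔞 h)).precompOfLinear R M (zero_add i)

/-- `ι` exhibits `H` as the colimit of the modules `Extⁱ(R ⧸ 𝔞 ^ t, M)`, expressed on elements. -/
structure IsColimitExt (i : ℕ) (M : ModuleCat.{u} R) (H : Type u) [AddCommGroup H] [Module R H]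
    (ι : ∀ t : ℕ, Abelian.Ext (ModuleCat.of R (R ⧸ 𝔞 ^ t)) M i →ₗ[R] H) : Prop where
  map_extPowMap : ∀ {t s : ℕ} (h : t ≤ s) (z), ι s (extPowMap 𝔞 h M i z) = ι t z
  exists_eq : ∀ y : H, ∃ t z, ι t z = y
  exists_extPowMap_eq_zero : ∀ {t : ℕ} (z), ι t z = 0 → ∃ s, ∃ h : t ≤ s, extPowMap 𝔞 h M i z = 0

/-- The modules `Extʲ(R ⧸ 𝔞 ^ t, M)` have colimit zero. -/
def ExtVanishes (M : ModuleCat.{u} R) (j : ℕ) : Prop :=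
  ∀ (t : ℕ) (z : Abelian.Ext (ModuleCat.of R (R ⧸ 𝔞 ^ t)) M j),
    ∃ s, ∃ h : t ≤ s, extPowMap 𝔞 h M j z = 0

variable {𝔞}

theorem extPowMap_extPowMap {t s r : ℕ} (h : t ≤ s) (h' : s ≤ r) {M : ModuleCat.{u} R} {i : ℕ}
    (z : Abelian.Ext (ModuleCat.of R (R ⧸ 𝔞 ^ t)) M i) :
    extPowMap 𝔞 h' M i (extPowMap 𝔞 h M i z) = extPowMap 𝔞 (h.trans h') M i z := by
  refine (Abelian.Ext.mk₀_comp_mk₀_assoc _ _ _).trans ?_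
  have hcomp : quotientPowMap 𝔞 h' ≫ quotientPowMap 𝔞 h = quotientPowMap 𝔞 (h.trans h') := by
    ext
    rfl
  rw [hcomp]
  rfl

theorem extPowMap_comp {t s : ℕ} (h : t ≤ s) {M N : ModuleCat.{u} R} {i j k : ℕ}
    (z : Abelian.Ext (ModuleCat.of R (R ⧸ 𝔞 ^ t)) M i) (w : Abelian.Ext M N j) (hk : i + j = k) :
    extPowMap 𝔞 h N k (z.comp w hk) = (extPowMap 𝔞 h M i z).comp w hk :=
  (Abelian.Ext.comp_assoc _ _ _ (zero_add i) _ (by lia)).symm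

variable {i : ℕ} {H : Type u} [AddCommGroup H] [Module R H] {S : ShortComplex (ModuleCat.{u} R)}

theorem IsColimitExt.of_shortExact_left (hS : S.ShortExact)
    (h0 : ∀ t : ℕ, Subsingleton (Abelian.Ext (ModuleCat.of R (R ⧸ 𝔞 ^ t)) S.X₂ i))
    (h1 : ∀ t : ℕ, Subsingleton (Abelian.Ext (ModuleCat.of R (R ⧸ 𝔞 ^ t)) S.X₂ (i + 1)))
    {ι : ∀ t : ℕ, Abelian.Ext (ModuleCat.of R (R ⧸ 𝔞 ^ t)) S.X₃ i →ₗ[R] H}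
    (hι : IsColimitExt 𝔞 i S.X₃ H ι) : ∃ ι', IsColimitExt 𝔞 (i + 1) S.X₁ H ι' := by
  let δ (t : ℕ) := hS.extClass.postcompOfLinear R (ModuleCat.of R (R ⧸ 𝔞 ^ t)) (rfl : i + 1 = _)
  have hδ (t : ℕ) : Function.Bijective (δ t) := by
    refine ⟨(injective_iff_map_eq_zero _).2 fun z hz ↦ ?_, fun z ↦ ?_⟩
    · obtain ⟨w, rfl⟩ := Abelian.Ext.covariant_sequence_exact₃ _ hS z rfl hz
      rw [(h0 t).elim w 0, Abelian.Ext.zero_comp]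
    · exact Abelian.Ext.covariant_sequence_exact₁ _ hS z ((h1 t).elim _ _) rfl
  let e (t : ℕ) := LinearEquiv.ofBijective (δ t) (hδ t)
  have he (t z) : e t z = z.comp hS.extClass rfl := rfl
  have hsymm {t s : ℕ} (h : t ≤ s) (z) :
      (e s).symm (extPowMap 𝔞 h _ _ z) = extPowMap 𝔞 h _ _ ((e t).symm z) := by
    rw [LinearEquiv.symm_apply_eq, he, ← extPowMap_comp, ← he, LinearEquiv.apply_symm_apply]
  refine ⟨fun t ↦ ι t ∘ₗ (e t).symm.toLinearMap, fun {t s} h z ↦ ?_, fun y ↦ ?_, fun {t} z hz ↦ ?_⟩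
  · exact (congrArg (ι s) (hsymm h z)).trans (hι.map_extPowMap h _)
  · obtain ⟨t, z, rfl⟩ := hι.exists_eq y
    exact ⟨t, e t z, congrArg (ι t) ((e t).symm_apply_apply z)⟩
  · obtain ⟨s, h, hs⟩ := hι.exists_extPowMap_eq_zero _ hz
    exact ⟨s, h, (LinearEquiv.map_eq_zero_iff (e s).symm).1 ((hsymm h z).trans hs)⟩

theorem IsColimitExt.of_shortExact_middle (hS : S.ShortExact)
    (h0 : ExtVanishes 𝔞 S.X₁ i) (h1 : ExtVanishes 𝔞 S.X₁ (i + 1))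
    {ι : ∀ t : ℕ, Abelian.Ext (ModuleCat.of R (R ⧸ 𝔞 ^ t)) S.X₃ i →ₗ[R] H}
    (hι : IsColimitExt 𝔞 i S.X₃ H ι) : ∃ ι', IsColimitExt 𝔞 i S.X₂ H ι' := by
  let g (t : ℕ) :=
    (Abelian.Ext.mk₀ S.g).postcompOfLinear R (ModuleCat.of R (R ⧸ 𝔞 ^ t)) (add_zero i)
  have hg {t s : ℕ} (h : t ≤ s) (z) : g s (extPowMap 𝔞 h _ _ z) = extPowMap 𝔞 h _ _ (g t z) :=
    (extPowMap_comp h z _ (add_zero i)).symm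
  refine ⟨fun t ↦ ι t ∘ₗ g t, fun {t s} h z ↦ ?_, fun y ↦ ?_, fun {t} z hz ↦ ?_⟩
  · exact (congrArg (ι s) (hg h z)).trans (hι.map_extPowMap h _)
  · obtain ⟨t, z, rfl⟩ := hι.exists_eq y
    obtain ⟨s, h, hs⟩ := h1 t (z.comp hS.extClass rfl)
    rw [extPowMap_comp] at hs
    obtain ⟨w, hw⟩ := Abelian.Ext.covariant_sequence_exact₃ _ hS _ rfl hs
    exact ⟨s, w, (congrArg (ι s) hw).trans (hι.map_extPowMap h _)⟩
  · obtain ⟨s, h, hs⟩ := hι.exists_extPowMap_eq_zero _ hz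
    obtain ⟨w, hw⟩ := Abelian.Ext.covariant_sequence_exact₂ _ hS (extPowMap 𝔞 h _ _ z)
      ((hg h z).trans hs)
    obtain ⟨r, h', hr⟩ := h0 s w
    refine ⟨r, h.trans h', ?_⟩
    rw [← extPowMap_extPowMap h h', ← hw, extPowMap_comp, hr, Abelian.Ext.zero_comp]

end DirectSystem

section TorsionVanishing

variable {R : Type u} [CommRing R] {𝔞 : Ideal R} {S : ShortComplex (ModuleCat.{u} R)}

theorem ExtVanishes.succ_of_shortExact (hS : S.ShortExact) [Injective S.X₂] {j : ℕ}
    (h : ExtVanishes 𝔞 S.X₃ j) : ExtVanishes 𝔞 S.X₁ (j + 1) := by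
  intro t z
  obtain ⟨w, rfl⟩ :=
    Abelian.Ext.covariant_sequence_exact₁ _ hS z (Abelian.Ext.eq_zero_of_injective _) rfl
  obtain ⟨s, hs, hw⟩ := h t w
  exact ⟨s, hs, by rw [extPowMap_comp, hw, Abelian.Ext.zero_comp]⟩

/-- A map `R ⧸ 𝔞 ^ t ⟶ S.X₃` lifts to `S.X₂` after restriction to `R ⧸ 𝔞 ^ s`, where `𝔞 ^ s` kills
a preimage of the image of `1`. -/
theorem ExtVanishes.one_of_shortExact (hS : S.ShortExact) [Injective S.X₂]
    (h : IsTorsionIdeal 𝔞 S.X₂) : ExtVanishes 𝔞 S.X₁ 1 := by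
  intro t z
  obtain ⟨w, rfl⟩ := Abelian.Ext.covariant_sequence_exact₁ _ hS z
    (Abelian.Ext.eq_zero_of_injective _) (zero_add 1)
  obtain ⟨f, rfl⟩ := (Abelian.Ext.mk₀_bijective _ _).2 w
  obtain ⟨y, hy⟩ := (ModuleCat.epi_iff_surjective S.g).1 hS.epi_g
    (f.hom (Submodule.Quotient.mk 1))
  obtain ⟨n, hn⟩ := h y
  let l : ModuleCat.of R (R ⧸ 𝔞 ^ max t n) ⟶ S.X₂ := ModuleCat.ofHom
    (Submodule.liftQ _ (LinearMap.toSpanSingleton R S.X₂ y)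
      fun a ha ↦ hn a (Ideal.pow_le_pow_right (le_max_right t n) ha))
  have hl : quotientPowMap 𝔞 (le_max_left t n) ≫ f = l ≫ S.g :=
    ModuleCat.hom_ext (Submodule.linearMap_qext _ (LinearMap.ext_ring
      (hy.symm.trans (congrArg S.g.hom (one_smul R y).symm))))
  have hfl : extPowMap 𝔞 (le_max_left t n) _ 0 (Abelian.Ext.mk₀ f) =
      (Abelian.Ext.mk₀ l).comp (Abelian.Ext.mk₀ S.g) (add_zero 0) :=
    (Abelian.Ext.mk₀_comp_mk₀ _ _).trans
      ((congrArg _ hl).trans (Abelian.Ext.mk₀_comp_mk₀ _ _).symm)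
  refine ⟨max t n, le_max_left t n, ?_⟩
  rw [extPowMap_comp, hfl, Abelian.Ext.comp_assoc _ _ _ (zero_add 0) (zero_add 1) (by lia),
    hS.comp_extClass, Abelian.Ext.comp_zero]

variable {X : Type u} [AddCommGroup X] [Module R X]

variable (R X) in
theorem exists_injective_linearMap :
    ∃ (I : ModuleCat.{u} R) (f : X →ₗ[R] I), Injective I ∧ Function.Injective f :=
  ⟨Injective.under (ModuleCat.of R X), (Injective.ι (ModuleCat.of R X)).hom, inferInstance,
    (ModuleCat.mono_iff_injective _).1 inferInstance⟩

variable [IsNoetherianRing R]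

theorem IsTorsionIdeal.exists_injective_linearMap (hX : IsTorsionIdeal 𝔞 X) :
    ∃ (J : ModuleCat.{u} R) (f : X →ₗ[R] J),
      Injective J ∧ IsTorsionIdeal 𝔞 J ∧ Function.Injective f := by
  obtain ⟨I, f, hI, hf⟩ := _root_.exists_injective_linearMap R X
  refine ⟨ModuleCat.of R (gammaSubmodule 𝔞 I), f.codRestrict _ fun m ↦ (hX m).imp
    fun n hn a ha ↦ ?_, injective_gammaSubmodule, isTorsionIdeal_gammaSubmodule 𝔞 I,
    (LinearMap.injective_codRestrict_iff _).2 hf⟩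
  rw [← map_smul, hn a ha, map_zero]

theorem IsTorsionIdeal.extVanishes (hX : IsTorsionIdeal 𝔞 X) (j : ℕ) :
    ExtVanishes 𝔞 (ModuleCat.of R X) (j + 1) := by
  induction j generalizing X with
  | zero =>
    obtain ⟨J, f, hJ, hJ', hf⟩ := hX.exists_injective_linearMap
    exact ExtVanishes.one_of_shortExact (shortExact_of_injective hf) hJ'
  | succ j ih =>
    obtain ⟨J, f, hJ, hJ', hf⟩ := hX.exists_injective_linearMap
    exact ExtVanishes.succ_of_shortExact (shortExact_of_injective hf)
      (ih (hJ'.of_surjective _ (Submodule.mkQ_surjective _)))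

end TorsionVanishing

section LocalCohomology

open Limits Opposite

variable {R : Type u} [CommRing R] {𝔞 : Ideal R}

theorem coe_extZeroEquivTorsionBySet_extPowMap {M : Type u} [AddCommGroup M] [Module R M]
    {t s : ℕ} (h : t ≤ s) (z) :
    (extZeroEquivTorsionBySet M (𝔞 ^ s) (extPowMap 𝔞 h (ModuleCat.of R M) 0 z) : M) =
      extZeroEquivTorsionBySet M (𝔞 ^ t) z := by
  obtain ⟨f, rfl⟩ := (Abelian.Ext.mk₀_bijective _ _).2 z
  rw [coe_extZeroEquivTorsionBySet_mk₀]
  exact (congrArg (fun w ↦ (extZeroEquivTorsionBySet M (𝔞 ^ s) w : M))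
    (Abelian.Ext.mk₀_comp_mk₀ _ _)).trans (coe_extZeroEquivTorsionBySet_mk₀ _)

theorem exists_isColimitExt_zero (M : Type u) [AddCommGroup M] [Module R M] :
    ∃ ι, IsColimitExt 𝔞 0 (ModuleCat.of R M) (gammaSubmodule 𝔞 M) ι := by
  let e (t : ℕ) := extZeroEquivTorsionBySet M (𝔞 ^ t)
  have hle (t : ℕ) : Submodule.torsionBySet R M (𝔞 ^ t : Ideal R) ≤ gammaSubmodule 𝔞 M :=
    torsionBySet_le_gammaSubmodule le_rfl
  refine ⟨fun t ↦ Submodule.inclusion (hle t) ∘ₗ (e t).toLinearMap,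
    fun h z ↦ Subtype.ext (coe_extZeroEquivTorsionBySet_extPowMap h z), fun y ↦ ?_,
    fun {t} z hz ↦ ⟨t, le_rfl, ?_⟩⟩
  · obtain ⟨y, t, hy⟩ := y
    refine ⟨t, (e t).symm ⟨y, (Submodule.mem_torsionBySet_iff _ _).2 fun a ↦ hy a a.2⟩, ?_⟩
    exact congrArg (Submodule.inclusion (hle t)) ((e t).apply_symm_apply _)
  · rw [(e t).map_eq_zero_iff.1 ((map_eq_zero_iff _ (Submodule.inclusion_injective (hle t))).1 hz),
      map_zero]

theorem bijective_colimit_desc {J : Type*} [Category* J] {G : J ⥤ ModuleCat.{u} R}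
    [HasColimit G] [PreservesColimit G (forget (ModuleCat.{u} R))] (c : Cocone G)
    (hsurj : ∀ y : c.pt, ∃ j, ∃ z : G.obj j, c.ι.app j z = y)
    (hinj : ∀ j (z : G.obj j), c.ι.app j z = 0 → ∃ k, ∃ f : j ⟶ k, G.map f z = 0) :
    Function.Bijective (colimit.desc G c) := by
  have hdesc (j) (z : G.obj j) : colimit.desc G c (colimit.ι G j z) = c.ι.app j z :=
    ConcreteCategory.congr_hom (colimit.ι_desc c j) z
  refine ⟨(injective_iff_map_eq_zero (colimit.desc G c).hom).2 fun x hx ↦ ?_, fun y ↦ ?_⟩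
  · obtain ⟨j, z, rfl⟩ := Concrete.colimit_exists_rep G x
    obtain ⟨k, f, hf⟩ := hinj j z ((hdesc j z).symm.trans hx)
    have hw : colimit.ι G k (G.map f z) = colimit.ι G j z :=
      ConcreteCategory.congr_hom (colimit.w G f) z
    rw [← hw, hf, map_zero]
  · obtain ⟨j, z, rfl⟩ := hsurj y
    exact ⟨_, hdesc j z⟩

theorem IsColimitExt.nonempty_linearEquiv {i : ℕ} {M : ModuleCat.{u} R} {H : Type u}
    [AddCommGroup H] [Module R H]
    {ι : ∀ t : ℕ, Abelian.Ext (ModuleCat.of R (R ⧸ 𝔞 ^ t)) M i →ₗ[R] H}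
    (hι : IsColimitExt 𝔞 i M H ι) : Nonempty ((localCohomology 𝔞 i).obj M ≃ₗ[R] H) := by
  let F := localCohomology.diagram (localCohomology.idealPowersDiagram 𝔞) i
  let G : ℕᵒᵖᵒᵖ ⥤ ModuleCat.{u} R := F ⋙ (evaluation _ _).obj M
  let e (t : ℕᵒᵖᵒᵖ) : G.obj t ≃ₗ[R] Abelian.Ext (ModuleCat.of R (R ⧸ 𝔞 ^ t.unop.unop)) M i :=
    derivedExtEquiv R _ M i
  have he {t s : ℕᵒᵖᵒᵖ} (f : t ⟶ s) (z : G.obj t) :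
      e s (G.map f z) = extPowMap 𝔞 f.unop.unop.le M i (e t z) :=
    derivedExtEquiv_map
      ((localCohomology.ringModIdeals (localCohomology.idealPowersDiagram 𝔞)).map f.unop) M i z
  let c : Cocone G :=
    { pt := ModuleCat.of R H
      ι :=
        { app t := ModuleCat.ofHom (ι t.unop.unop ∘ₗ (e t).toLinearMap)
          naturality t s f := ModuleCat.hom_ext (LinearMap.ext fun z ↦
            (congrArg (ι s.unop.unop) (he f z)).trans (hι.map_extPowMap _ _)) } }
  have : PreservesFilteredColimitsOfSize.{0, 0} (forget (ModuleCat.{u} R)) :=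
    preservesFilteredColimitsOfSize_shrink.{0, u, 0, u} _
  have hbij : Function.Bijective (colimit.desc G c) := by
    refine bijective_colimit_desc c (fun y ↦ ?_) fun t z hz ↦ ?_
    · obtain ⟨t, z, rfl⟩ := hι.exists_eq y
      exact ⟨op (op t), (e _).symm z, congrArg (ι t) ((e (op (op t))).apply_symm_apply z)⟩
    · obtain ⟨s, h, hs⟩ := hι.exists_extPowMap_eq_zero (e t z) hz
      exact ⟨op (op s), (homOfLE h).op.op, (e _).map_eq_zero_iff.1 ((he _ z).trans hs)⟩
  exact ⟨(colimitObjIsoColimitCompEvaluation F M).toLinearEquiv ≪≫ₗ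
    LinearEquiv.ofBijective (colimit.desc G c).hom hbij⟩

variable [IsNoetherianRing R]

theorem FinExt.gammaSubmodule (h : HasTwoTermCofiniteness 𝔞) {M : Type u} [AddCommGroup M]
    [Module R M] (h0 : FinExt R (R ⧸ 𝔞) M 0) (h1 : FinExt R (R ⧸ 𝔞) M 1) (n : ℕ) :
    FinExt R (R ⧸ 𝔞) (gammaSubmodule 𝔞 M) n := by
  have := subsingleton_ext_zero_of_gammaSubmodule_eq_bot (pow_one 𝔞).le
    (gammaSubmodule_quotient_eq_bot (𝔞 := 𝔞) (X := M))
  exact h _ (isTorsionIdeal_gammaSubmodule 𝔞 M) (FinExt.submodule_zero _ h0)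
    (FinExt.submodule_one _ inferInstance h1) n

/-- Embed `M` in an injective `I` and use that `Γ_𝔞(M)` is the preimage of `Γ_𝔞(I)`. -/
theorem exists_injective_quotient_gammaSubmodule (M : Type u) [AddCommGroup M] [Module R M] :
    ∃ (E : ModuleCat.{u} R) (f : (M ⧸ gammaSubmodule 𝔞 M) →ₗ[R] E), Function.Injective f ∧
      ∀ {𝔟 : Ideal R} {t : ℕ}, 𝔞 ^ t ≤ 𝔟 →
        ∀ n, Subsingleton (Abelian.Ext (ModuleCat.of R (R ⧸ 𝔟)) E n) := by
  obtain ⟨I, f, hI, hf⟩ := exists_injective_linearMap R M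
  have : Injective (ModuleCat.of R I) := hI
  refine ⟨ModuleCat.of R (I ⧸ gammaSubmodule 𝔞 I),
    Submodule.mapQ _ _ f (comap_gammaSubmodule_of_injective hf).ge, ?_,
    fun h n ↦ subsingleton_ext_quotient_gammaSubmodule h n⟩
  rw [← LinearMap.ker_eq_bot, Submodule.ker_mapQ, comap_gammaSubmodule_of_injective hf,
    Submodule.mkQ_map_self]

theorem exists_isColimitExt (h : HasTwoTermCofiniteness 𝔞) (i : ℕ) (M : Type u)
    [AddCommGroup M] [Module R M] (hM : ∀ n ≤ i + 1, FinExt R (R ⧸ 𝔞) M n) :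
    ∃ H : ModuleCat.{u} R, (∃ ι, IsColimitExt 𝔞 i (ModuleCat.of R M) H ι) ∧
      IsTorsionIdeal 𝔞 H ∧ ∀ n, FinExt R (R ⧸ 𝔞) H n := by
  have hΓ : ∀ n, FinExt R (R ⧸ 𝔞) (gammaSubmodule 𝔞 M) n :=
    FinExt.gammaSubmodule h (hM 0 (by lia)) (hM 1 (by lia))
  induction i generalizing M with
  | zero =>
    exact ⟨ModuleCat.of R (gammaSubmodule 𝔞 M), exists_isColimitExt_zero M,
      isTorsionIdeal_gammaSubmodule 𝔞 M, hΓ⟩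
  | succ i ih =>
    obtain ⟨E, f, hf, hE⟩ := exists_injective_quotient_gammaSubmodule (𝔞 := 𝔞) M
    have hN (n) (hn : n ≤ i + 2) : FinExt R (R ⧸ 𝔞) (M ⧸ gammaSubmodule 𝔞 M) n :=
      finite_ext_X₃ (shortExact_submodule (gammaSubmodule 𝔞 M)) (hM n hn) (hΓ (n + 1))
    have hL (n) (hn : n ≤ i + 1) : FinExt R (R ⧸ 𝔞) (E ⧸ LinearMap.range f) n := by
      have := hE (pow_one 𝔞).le n
      have hEn : FinExt R (R ⧸ 𝔞) E n := inferInstance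
      exact finite_ext_X₃ (shortExact_of_injective hf) hEn (hN (n + 1) (by lia))
    obtain ⟨H, ⟨ι, hι⟩, hH, hfin⟩ := ih _ hL
      (FinExt.gammaSubmodule h (hL 0 (by lia)) (hL 1 (by lia)))
    obtain ⟨ι', hι'⟩ := IsColimitExt.of_shortExact_left (shortExact_of_injective hf)
      (fun _ ↦ hE le_rfl i) (fun _ ↦ hE le_rfl (i + 1)) hι
    exact ⟨H, IsColimitExt.of_shortExact_middle (shortExact_submodule (gammaSubmodule 𝔞 M))
      ((isTorsionIdeal_gammaSubmodule 𝔞 M).extVanishes i)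
      ((isTorsionIdeal_gammaSubmodule 𝔞 M).extVanishes (i + 1)) hι', hH, hfin⟩

end LocalCohomology

section Main

variable {R : Type u} [CommRing R] {𝔞 : Ideal R} {X : Type u} [AddCommGroup X] [Module R X]

theorem IsTorsionIdeal.support_subset (h : IsTorsionIdeal 𝔞 X) :
    Module.support R X ⊆ PrimeSpectrum.zeroLocus (𝔞 : Set R) := by
  intro p hp a ha
  obtain ⟨m, hm⟩ := Module.mem_support_iff'.1 hp
  obtain ⟨n, hn⟩ := h m
  by_contra hap
  exact hm (a ^ n) (fun h ↦ hap (p.2.mem_of_pow_mem n h)) (hn _ (Ideal.pow_mem_pow ha n))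

theorem finite_extIdeal_iff {M : ModuleCat.{u} R} {n : ℕ} :
    Module.Finite R (extIdeal 𝔞 n M) ↔ FinExt R (R ⧸ 𝔞) M n :=
  Module.Finite.equiv_iff (derivedExtEquiv R (ModuleCat.of R (R ⧸ 𝔞)) M n)

variable [IsNoetherianRing R]

theorem IsTorsionIdeal.associatedPrimes_subset (h : IsTorsionIdeal 𝔞 X) :
    associatedPrimes R X ⊆ associatedPrimes R (Submodule.torsionBySet R X (𝔞 : Set R)) := by
  intro p hp
  obtain ⟨hp, x, hx⟩ := isAssociatedPrime_iff.1 hp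
  have hmem (r : R) : r ∈ p ↔ r • x = 0 := by
    rw [hx, Submodule.mem_colon_singleton, Submodule.mem_bot]
  have hap : 𝔞 ≤ p := fun a ha ↦ by
    obtain ⟨n, hn⟩ := h x
    exact hp.mem_of_pow_mem n ((hmem _).2 (hn _ (Ideal.pow_mem_pow ha n)))
  have hxa : x ∈ Submodule.torsionBySet R X (𝔞 : Set R) :=
    (Submodule.mem_torsionBySet_iff _ _).2 fun a ↦ (hmem _).1 (hap a.2)
  refine isAssociatedPrime_iff.2 ⟨hp, ⟨x, hxa⟩, Ideal.ext fun r ↦ ?_⟩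
  rw [hmem, Submodule.mem_colon_singleton, Submodule.mem_bot, ← Submodule.coe_eq_zero,
    Submodule.coe_smul]

theorem IsTorsionIdeal.finite_associatedPrimes (h : IsTorsionIdeal 𝔞 X)
    (h0 : FinExt R (R ⧸ 𝔞) X 0) : (associatedPrimes R X).Finite :=
  have := finExt_zero_iff.1 h0
  (associatedPrimes.finite R _).subset h.associatedPrimes_subset

theorem localCohomology_isCofinite_and_associatedPrimes_finite_general
    (h : HasTwoTermCofiniteness 𝔞) (M : ModuleCat.{u} R) {i : ℕ}
    (hM : ∀ n ≤ i + 1, Module.Finite R (extIdeal 𝔞 n M)) :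
    IsCofinite 𝔞 ((localCohomology 𝔞 i).obj M) ∧
      (associatedPrimes R ((localCohomology 𝔞 i).obj M)).Finite := by
  obtain ⟨H, ⟨ι, hι⟩, hH, hfin⟩ :=
    exists_isColimitExt h i M fun n hn ↦ finite_extIdeal_iff.1 (hM n hn)
  obtain ⟨e⟩ := hι.nonempty_linearEquiv
  have htorsion : IsTorsionIdeal 𝔞 ((localCohomology 𝔞 i).obj M) :=
    hH.of_surjective e.symm.toLinearMap e.symm.surjective
  have hext (n) : FinExt R (R ⧸ 𝔞) ((localCohomology 𝔞 i).obj M) n :=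
    FinExt.congr_right e.symm (hfin n)
  exact ⟨⟨htorsion.support_subset, fun n ↦ finite_extIdeal_iff.2 (hext n)⟩,
    htorsion.finite_associatedPrimes (hext 0)⟩

end Main

/-- Yang–Shen, Corollary 4.3(1) (module case): let `𝔞` be a proper ideal of a noetherian ring
`R` with `dim R/𝔞 ≤ 1`, or `dim R ≤ 2`, or `ara 𝔞 ≤ 1`, and let `M` be an `R`-module with
`Ext^i_R(R/𝔞, M)` finitely generated for all `i`. Then `H^i_𝔞(M)` is `𝔞`-cofinite for all `i`;
in particular, `Ass_R H^i_𝔞(M)` is finite for all `i`. -/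
theorem localCohomology_isCofinite_and_associatedPrimes_finite
    {R : Type u} [CommRing R] [IsNoetherianRing R] (𝔞 : Ideal R) (ha : 𝔞 ≠ ⊤)
    (hcase : ringKrullDim (R ⧸ 𝔞) ≤ 1 ∨ ringKrullDim R ≤ 2 ∨ arithRank 𝔞 ≤ 1)
    (M : ModuleCat.{u} R) (hext : ∀ i : ℕ, Module.Finite R (extIdeal 𝔞 i M)) :
    (∀ i : ℕ, IsCofinite 𝔞 ((localCohomology 𝔞 i).obj M)) ∧
      (∀ i : ℕ, (associatedPrimes R ((localCohomology 𝔞 i).obj M)).Finite) :=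
  have key (i : ℕ) := localCohomology_isCofinite_and_associatedPrimes_finite_general
    (hasTwoTermCofiniteness hcase) M (i := i) fun n _ ↦ hext n
  ⟨fun i ↦ (key i).1, fun i ↦ (key i).2⟩
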